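/- arXiv:1402.1308 — 2 statements merged into one kernel-verified Lean document; each statement's English description precedes it below -/
import Mathlib

section
/- Let d ≥ 1, D := {1,...,d}, let B ⊆ D with |B| > 1, and let φ : [0,∞) → [0,∞) be a nondecreasing function with φ(x)/(x log^{|B|-1} x) → 0 as x → +∞. Then there exists f ∈ L^1(I^d) such that (a) ∫_{I^d} φ(|f|) < ∞, and (b) the means (L_{n(B)}∘R_{n(B')})(f) diverge in Lebesgue measure on I^d as n → ∞; here n(B) denotes the index vector all of whose coordinates equal n. -/
open MeasureTheory Filter

noncomputable section

/-- The unit cube `[0,1)^d`. -/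
def unitCube (d : ℕ) : Set (Fin d → ℝ) := Set.univ.pi fun _ => Set.Ico (0:ℝ) 1

/-- Lebesgue measure restricted to the unit cube `[0,1)^d`. -/
def cubeMeasure (d : ℕ) : Measure (Fin d → ℝ) := volume.restrict (unitCube d)

/-- The `1`-periodic function equal to `1` on `[0,1/2)` and to `-1` on `[1/2,1)`. -/
def r0 (x : ℝ) : ℝ := if Int.fract x < 1/2 then 1 else -1

/-- The Rademacher functions. -/
def rademacher (n : ℕ) (x : ℝ) : ℝ := r0 (2 ^ n * x)

/-- The Walsh functions (in Paley enumeration, via binary digits). -/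
def walsh (n : ℕ) (x : ℝ) : ℝ :=
  ∏ k ∈ Finset.range (n + 1), if n.testBit k then rademacher k x else 1

/-- The Walsh–Dirichlet kernel `D_n`. -/
def dirichletKernel (n : ℕ) (x : ℝ) : ℝ := ∑ k ∈ Finset.range n, walsh k x

/-- `l_n = ∑_{k=1}^{n-1} 1/k`. -/
def logSum (n : ℕ) : ℝ := ∑ k ∈ Finset.Icc 1 (n - 1), (1 : ℝ) / k

/-- The Nörlund logarithmic kernel `F_n`. -/
def FKernel (n : ℕ) (u : ℝ) : ℝ :=
  (1 / logSum n) * ∑ i ∈ Finset.Ico 1 n, dirichletKernel (n - i) u / i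

/-- The Riesz logarithmic kernel `G_n`. -/
def GKernel (n : ℕ) (u : ℝ) : ℝ :=
  (1 / logSum n) * ∑ i ∈ Finset.Ico 1 n, dirichletKernel i u / i

/-- Walsh–Fourier coefficient of `f` on the unit cube. -/
def walshCoef {d : ℕ} (f : (Fin d → ℝ) → ℝ) (j : Fin d → ℕ) : ℝ :=
  ∫ x, f x * ∏ i, walsh (j i) (x i) ∂(cubeMeasure d)

/-- Rectangular partial sums of the multiple Walsh–Fourier series. -/
def rectPartialSum {d : ℕ} (f : (Fin d → ℝ) → ℝ) (N : Fin d → ℕ) (x : Fin d → ℝ) : ℝ :=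
  ∑ j ∈ Fintype.piFinset (fun i => Finset.range (N i)),
    walshCoef f j * ∏ i, walsh (j i) (x i)

/-- The mixed logarithmic means `(L_{n_B} ∘ R_{n_{B'}})(f)`. -/
def mixedLogMean {d : ℕ} (B : Finset (Fin d)) (f : (Fin d → ℝ) → ℝ)
    (n : Fin d → ℕ) (x : Fin d → ℝ) : ℝ :=
  (∏ j, logSum (n j))⁻¹ *
    ∑ i ∈ Fintype.piFinset (fun j => Finset.Ico 1 (n j)),
      rectPartialSum f (fun j => if j ∈ B then n j - i j else i j) x / ∏ j, (i j : ℝ)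

/-- A Young function: convex, continuous, even, vanishing at `0`, with
`Q(u)/u → ∞` at `+∞` and `Q(u)/u → 0` at `0`. -/
structure YoungFunction where
  toFun : ℝ → ℝ
  nonneg : ∀ u, 0 ≤ toFun u
  convexOn : ConvexOn ℝ Set.univ toFun
  continuous : Continuous toFun
  even : ∀ u, toFun (-u) = toFun u
  map_zero : toFun 0 = 0
  tendsto_atTop : Tendsto (fun u => toFun u / u) atTop atTop
  tendsto_zero : Tendsto (fun u => toFun u / u) (nhdsWithin 0 {(0:ℝ)}ᶜ) (nhds 0)

/-- The set of admissible constants `k` in the Luxemburg norm of `f`. -/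
def orliczSet {d : ℕ} (Q : YoungFunction) (f : (Fin d → ℝ) → ℝ) : Set ℝ :=
  {k | 0 < k ∧ Integrable (fun x => Q.toFun (|f x| / k)) (cubeMeasure d) ∧
    ∫ x, Q.toFun (|f x| / k) ∂(cubeMeasure d) ≤ 1}

/-- `f` belongs to the Orlicz space `L_Q(I^d)`. -/
def MemOrlicz {d : ℕ} (Q : YoungFunction) (f : (Fin d → ℝ) → ℝ) : Prop :=
  Measurable f ∧ (orliczSet Q f).Nonempty

/-- The Luxemburg norm on the Orlicz space `L_Q(I^d)`. -/
def orliczNorm {d : ℕ} (Q : YoungFunction) (f : (Fin d → ℝ) → ℝ) : ℝ :=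
  sInf (orliczSet Q f)

/-- `p_n = 2^{2n} + 2^{2n-2} + ⋯ + 2^0`. -/
def pIdx (n : ℕ) : ℕ := ∑ k ∈ Finset.range (n + 1), 4 ^ k

/-- `m̃ = ⌊ l_{p_{⌊m/2⌋}-1}/16 - 2^15 ⌋`. -/
def mTilde (m : ℕ) : ℤ := ⌊logSum (pIdx (m / 2) - 1) / 16 - 2 ^ 15⌋

/-- `m₀ = min{m : m̃ > 1}`. -/
def m₀ : ℕ := sInf {m : ℕ | 1 < mTilde m}

/-- The set `Ω_n`. -/
def Omega (n : ℕ) : Set ℝ :=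
  ⋃ m ∈ Finset.Icc n (2 * n),
    Set.Ico ((2:ℝ) ^ (-(m:ℤ) - 1) + (2:ℝ) ^ (-(m:ℤ) - mTilde m)) ((2:ℝ) ^ (-(m:ℤ)))

/-- `k`-th binary digit of `x` (the expansion not terminating in `1`'s). -/
def binDigit (k : ℕ) (x : ℝ) : ℕ := (⌊x * 2 ^ (k + 1)⌋).toNat % 2

/-- Dyadic addition on `[0,1)`. -/
def dyadicAdd (x t : ℝ) : ℝ :=
  ∑' k : ℕ, |(binDigit k x : ℝ) - (binDigit k t : ℝ)| / 2 ^ (k + 1)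

/-- Dyadic convolution `f ∗ K` on `[0,1)`. -/
def dyadicConv (f K : ℝ → ℝ) (x : ℝ) : ℝ :=
  ∫ t in Set.Ico (0:ℝ) 1, f t * K (dyadicAdd x t)

/-- Lebesgue measure restricted to `[0,1)`. -/
def unitMeasure : Measure ℝ := volume.restrict (Set.Ico (0:ℝ) 1)

/-- A set `A ⊆ L_Q(I^d)` is nowhere dense w.r.t. the Luxemburg norm. -/
def OrliczNowhereDense {d : ℕ} (Q : YoungFunction) (A : Set ((Fin d → ℝ) → ℝ)) : Prop :=
  ∀ f, MemOrlicz Q f → ∀ ε > 0, ∃ g, MemOrlicz Q g ∧ ∃ δ > 0,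
    (∀ h, MemOrlicz Q h → orliczNorm Q (h - g) < δ → orliczNorm Q (h - f) < ε) ∧
    (∀ h, MemOrlicz Q h → orliczNorm Q (h - g) < δ → h ∉ A)

/-- A set `A ⊆ L_Q(I^d)` is of first Baire category (meager) w.r.t. the Luxemburg norm. -/
def OrliczMeager {d : ℕ} (Q : YoungFunction) (A : Set ((Fin d → ℝ) → ℝ)) : Prop :=
  ∃ F : ℕ → Set ((Fin d → ℝ) → ℝ), (∀ k, OrliczNowhereDense Q (F k)) ∧ A ⊆ ⋃ k, F k

/-- Walsh function evaluated on a sign sequence. -/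
def WW (j : ℕ) (s : ℕ → ℝ) : ℝ :=
  ∏ k ∈ Finset.range (j + 1), if j.testBit k then s k else 1

lemma walsh_eq_WW (j : ℕ) (x : ℝ) : walsh j x = WW j (fun k => rademacher k x) := rfl

lemma WW_eq {j M : ℕ} (h : j < 2 ^ M) (s : ℕ → ℝ) :
    WW j s = ∏ k ∈ Finset.range M, if j.testBit k then s k else 1 := by
  have h1 : ∀ M₁ M₂, M₁ ≤ M₂ → j < 2 ^ M₁ →
      ∏ k ∈ Finset.range M₁, (if j.testBit k then s k else 1) =
      ∏ k ∈ Finset.range M₂, (if j.testBit k then s k else 1) := by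
    intro M₁ M₂ hc hM
    apply Finset.prod_subset
    · intro x hx
      simp only [Finset.mem_range] at hx ⊢
      omega
    · intro x _ hx
      simp only [Finset.mem_range, not_lt] at hx
      rw [Nat.testBit_lt_two_pow]
      · simp
      · exact lt_of_lt_of_le hM (Nat.pow_le_pow_right (by norm_num) hx)
  have h2 : j < 2 ^ (j + 1) := lt_trans (Nat.lt_succ_self j) Nat.lt_two_pow_self
  unfold WW
  rcases le_total M (j + 1) with h3 | h3
  · exact (h1 _ _ h3 h).symm
  · exact h1 _ _ h3 h2

lemma WW_congr {j M : ℕ} (h : j < 2 ^ M) {s t : ℕ → ℝ} (hst : ∀ k < M, s k = t k) :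
    WW j s = WW j t := by
  rw [WW_eq h, WW_eq h]
  apply Finset.prod_congr rfl
  intro k hk
  rw [hst k (Finset.mem_range.1 hk)]

lemma WW_mul (j : ℕ) (s t : ℕ → ℝ) : WW j (fun k => s k * t k) = WW j s * WW j t := by
  unfold WW
  rw [← Finset.prod_mul_distrib]
  apply Finset.prod_congr rfl
  intro k _
  split_ifs <;> simp

lemma WW_zero (s : ℕ → ℝ) : WW 0 s = 1 := by simp [WW]

lemma WW_one (s : ℕ → ℝ) : WW 1 s = s 0 := by
  rw [WW_eq (M := 1) (by norm_num)]; simp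

lemma WW_block (m a : ℕ) {b : ℕ} (hb : b < 2 ^ m) (s : ℕ → ℝ) :
    WW (2 ^ m * a + b) s = WW b s * WW a (fun k => s (m + k)) := by
  obtain ⟨M, hM⟩ : ∃ M, a < 2 ^ M := ⟨a, Nat.lt_two_pow_self⟩
  have h : 2 ^ m * a + b < 2 ^ (m + M) := by
    rw [pow_add]
    calc 2 ^ m * a + b < 2 ^ m * a + 2 ^ m := by omega
      _ = 2 ^ m * (a + 1) := by ring
      _ ≤ _ := Nat.mul_le_mul_left _ hM
  rw [WW_eq h, WW_eq hb, WW_eq hM, Finset.prod_range_add]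
  congr 1
  · apply Finset.prod_congr rfl
    intro k hk
    rw [Nat.testBit_two_pow_mul_add a hb, if_pos (Finset.mem_range.1 hk)]
  · apply Finset.prod_congr rfl
    intro k hk
    rw [Nat.testBit_two_pow_mul_add a hb]
    simp

lemma WW_shift (m a : ℕ) (s : ℕ → ℝ) :
    WW (2 ^ m * a) s = WW a (fun k => s (m + k)) := by
  have := WW_block m a (b := 0) (by positivity) s
  simpa [WW_zero] using this

lemma WW_top (m : ℕ) {b : ℕ} (hb : b < 2 ^ m) (s : ℕ → ℝ) :
    WW (2 ^ m + b) s = WW b s * s m := by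
  have := WW_block m 1 hb s
  simpa [WW_one] using this

lemma sum_WW (N : ℕ) (s : ℕ → ℝ) :
    ∑ j ∈ Finset.range (2 ^ N), WW j s = ∏ k ∈ Finset.range N, (1 + s k) := by
  induction N with
  | zero => simp [WW_zero]
  | succ N ih =>
    rw [pow_succ, mul_two, Finset.sum_range_add, Finset.prod_range_succ, ← ih, mul_add, mul_one,
      Finset.sum_mul]
    congr 1
    apply Finset.sum_congr rfl
    intro b hb
    exact WW_top N (Finset.mem_range.1 hb) s

lemma WW_xor (a b : ℕ) {s : ℕ → ℝ} (hs : ∀ k, s k * s k = 1) :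
    WW a s * WW b s = WW (a ^^^ b) s := by
  obtain ⟨M, hM, hM'⟩ : ∃ M, a < 2 ^ M ∧ b < 2 ^ M :=
    ⟨a + b, lt_of_lt_of_le Nat.lt_two_pow_self (Nat.pow_le_pow_right (by norm_num) (by omega)),
      lt_of_lt_of_le Nat.lt_two_pow_self (Nat.pow_le_pow_right (by norm_num) (by omega))⟩
  rw [WW_eq hM, WW_eq hM', WW_eq (Nat.xor_lt_two_pow hM hM'), ← Finset.prod_mul_distrib]
  apply Finset.prod_congr rfl
  intro k _
  rw [Nat.testBit_xor]
  cases a.testBit k <;> cases b.testBit k <;> simp [hs]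

lemma WW_sq (a : ℕ) {s : ℕ → ℝ} (hs : ∀ k, s k * s k = 1) : WW a s * WW a s = 1 := by
  rw [WW_xor a a hs, Nat.xor_self, WW_zero]

lemma WW_abs (a : ℕ) {s : ℕ → ℝ} (hs : ∀ k, s k * s k = 1) : |WW a s| = 1 := by
  have h := WW_sq a hs
  rw [← abs_mul_abs_self] at h
  nlinarith [abs_nonneg (WW a s)]

lemma r0_sq (x : ℝ) : r0 x * r0 x = 1 := by unfold r0; split_ifs <;> norm_num

lemma rad_sq (x : ℝ) (k : ℕ) : rademacher k x * rademacher k x = 1 := r0_sq _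

lemma r0_add_nat (x : ℝ) (n : ℕ) : r0 (x + n) = r0 x := by simp [r0]

lemma r0_add_half (x : ℝ) : r0 (x + 1/2) = - r0 x := by
  unfold r0
  have h0 := Int.fract_nonneg x
  have h1 := Int.fract_lt_one x
  by_cases h : Int.fract x < 1/2
  · have : Int.fract (x + 1/2) = Int.fract x + 1/2 := by
      rw [Int.fract_eq_iff]
      refine ⟨by linarith, by linarith, ⌊x⌋, ?_⟩
      rw [Int.fract]; ring
    rw [this, if_pos h, if_neg (by linarith)]
  · have : Int.fract (x + 1/2) = Int.fract x - 1/2 := by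
      rw [Int.fract_eq_iff]
      refine ⟨by linarith, by linarith, ⌊x⌋ + 1, ?_⟩
      rw [Int.fract]; push_cast; ring
    rw [this, if_neg h, if_pos (by linarith)]; norm_num

lemma measurable_r0 : Measurable r0 := by
  unfold r0
  exact Measurable.ite (measurableSet_lt measurable_fract measurable_const)
    measurable_const measurable_const

lemma measurable_rademacher (n : ℕ) : Measurable (rademacher n) := by
  unfold rademacher
  exact measurable_r0.comp (measurable_const.mul measurable_id)

lemma measurable_walsh (n : ℕ) : Measurable (walsh n) := by
  unfold walsh
  apply Finset.measurable_prod
  intro k _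
  split_ifs
  · exact measurable_rademacher k
  · exact measurable_const

lemma walsh_abs (n : ℕ) (x : ℝ) : |walsh n x| = 1 := WW_abs n (rad_sq x)

lemma walsh_mul (a b : ℕ) (x : ℝ) : walsh a x * walsh b x = walsh (a ^^^ b) x :=
  WW_xor a b (rad_sq x)

lemma walsh_zero (x : ℝ) : walsh 0 x = 1 := WW_zero _

lemma walsh_periodic (n : ℕ) : Function.Periodic (walsh n) 1 := by
  intro x
  unfold walsh
  apply Finset.prod_congr rfl
  intro k _
  have : rademacher k (x + 1) = rademacher k x := by
    unfold rademacher
    have := r0_add_nat (2 ^ k * x) (2 ^ k)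
    rw [← this]; congr 1; push_cast; ring
  rw [this]

lemma walsh_antiperiodic {n : ℕ} (hn : n ≠ 0) : ∃ c : ℝ, ∀ x, walsh n (x + c) = - walsh n x := by
  obtain ⟨k, m, ⟨a, rfl⟩, rfl⟩ := Nat.exists_eq_two_pow_mul_odd hn
  refine ⟨1 / 2 ^ (k + 1), fun x => ?_⟩
  have key : ∀ y, walsh (2 ^ k * (2 * a + 1)) y =
      rademacher k y * WW a (fun i => rademacher (k + (1 + i)) y) := by
    intro y
    rw [walsh_eq_WW, WW_shift]
    have := WW_block 1 a (b := 1) (by norm_num) (fun i => rademacher (k + i) y)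
    rw [pow_one] at this
    rw [this, WW_one]; simp
  rw [key, key]
  have h1 : rademacher k (x + 1 / 2 ^ (k + 1)) = - rademacher k x := by
    unfold rademacher
    rw [← r0_add_half]; congr 1; field_simp; ring
  have h2 : ∀ i, rademacher (k + (1 + i)) (x + 1 / 2 ^ (k + 1)) = rademacher (k + (1 + i)) x := by
    intro i
    unfold rademacher
    rw [← r0_add_nat (2 ^ (k + (1 + i)) * x) (2 ^ i)]; congr 1; push_cast; field_simp; ring
  rw [h1]; simp only [h2]; ring

lemma integral_walsh {n : ℕ} (hn : n ≠ 0) : ∫ x, walsh n x ∂unitMeasure = 0 := by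
  obtain ⟨c, hc⟩ := walsh_antiperiodic hn
  have h1 : ∫ x, walsh n x ∂unitMeasure = ∫ x in (0:ℝ)..1, walsh n x := by
    rw [intervalIntegral.integral_of_le zero_le_one, unitMeasure, integral_Ico_eq_integral_Ioc]
  have h2 := (walsh_periodic n).intervalIntegral_add_eq 0 c
  have h3 : ∫ x in (0:ℝ)..1, walsh n (x + c) = ∫ x in c..(c+1), walsh n x := by
    rw [intervalIntegral.integral_comp_add_right]; simp [add_comm]
  have h4 : ∫ x in (0:ℝ)..1, walsh n (x + c) = - ∫ x in (0:ℝ)..1, walsh n x := by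
    simp only [hc]; exact intervalIntegral.integral_neg
  rw [h1]
  simp only [zero_add] at h2
  linarith

instance : IsProbabilityMeasure unitMeasure := ⟨by simp [unitMeasure]⟩

lemma integral_walsh_ite (n : ℕ) : ∫ x, walsh n x ∂unitMeasure = if n = 0 then 1 else 0 := by
  split_ifs with h
  · subst h; simp [walsh_zero]
  · exact integral_walsh h

lemma integral_walsh_mul (a b : ℕ) :
    ∫ x, walsh a x * walsh b x ∂unitMeasure = if a = b then 1 else 0 := by
  simp only [walsh_mul, integral_walsh_ite, Nat.xor_eq_zero_iff]

lemma cubeMeasure_eq (d : ℕ) : cubeMeasure d = Measure.pi (fun _ : Fin d => unitMeasure) := by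
  unfold cubeMeasure unitCube unitMeasure
  rw [volume_pi, Measure.restrict_pi_pi]

instance (d : ℕ) : IsProbabilityMeasure (cubeMeasure d) := by
  rw [cubeMeasure_eq]; infer_instance

/-- The finite group of sign vectors of length `N`. -/
abbrev Gam (N : ℕ) := Fin N → ℤˣ

/-- A sign vector, extended by `1` to a real sequence. -/
def ex {N : ℕ} (γ : Gam N) : ℕ → ℝ := fun k => if h : k < N then ((γ ⟨k, h⟩ : ℤ) : ℝ) else 1

instance : MeasurableSingletonClass ℤˣ := ⟨fun u => by
  refine ⟨{(u : ℤ)}, measurableSet_singleton _, ?_⟩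
  ext v; exact ⟨fun h => Units.ext h, fun h => congrArg Units.val h⟩⟩

/-- The first `N` Rademacher signs of `x`. -/
def cell (N : ℕ) (x : ℝ) : Gam N := fun k => if Int.fract (2 ^ (k : ℕ) * x) < 1/2 then 1 else -1

lemma ex_mul {N : ℕ} (γ δ : Gam N) : ex (γ * δ) = fun k => ex γ k * ex δ k := by
  funext k; unfold ex; split_ifs <;> simp

lemma ex_sq {N : ℕ} (γ : Gam N) (k : ℕ) : ex γ k * ex γ k = 1 := by
  unfold ex
  split_ifs with h
  · rcases Int.units_eq_one_or (γ ⟨k, h⟩) with h | h <;> simp [h]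
  · simp

lemma ex_cases {N : ℕ} (γ : Gam N) (k : ℕ) : ex γ k = 1 ∨ ex γ k = -1 :=
  mul_self_eq_one_iff.1 (ex_sq γ k)

lemma ex_cell {N k : ℕ} (hk : k < N) (x : ℝ) : ex (cell N x) k = rademacher k x := by
  simp only [ex, hk, cell, rademacher, r0, dif_pos]
  split_ifs <;> simp

lemma walsh_cell {N j : ℕ} (hj : j < 2 ^ N) (x : ℝ) : walsh j x = WW j (ex (cell N x)) := by
  rw [walsh_eq_WW]
  exact WW_congr hj (fun k hk => (ex_cell hk x).symm)

lemma ex_injective {N : ℕ} {γ δ : Gam N} (h : ∀ k < N, ex γ k = ex δ k) : γ = δ := by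
  funext k
  have := h k k.2
  simp only [ex, k.2, dif_pos] at this
  exact Units.ext (by exact_mod_cast this)

lemma dirichlet_cell {N : ℕ} (γ : Gam N) (x : ℝ) :
    ∑ j ∈ Finset.range (2 ^ N), WW j (ex γ) * walsh j x = if cell N x = γ then 2 ^ N else 0 := by
  have h1 : ∑ j ∈ Finset.range (2 ^ N), WW j (ex γ) * walsh j x =
      ∑ j ∈ Finset.range (2 ^ N), WW j (ex (γ * cell N x)) := by
    apply Finset.sum_congr rfl
    intro j hj
    rw [walsh_cell (Finset.mem_range.1 hj), ex_mul, WW_mul]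
  rw [h1, sum_WW]
  split_ifs with h
  · rw [h, ex_mul]
    simp only [ex_sq]; norm_num
  · have : ∃ k < N, ex (cell N x) k ≠ ex γ k := by
      by_contra hc
      push Not at hc
      exact h (ex_injective hc)
    obtain ⟨k, hk, hne⟩ := this
    apply Finset.prod_eq_zero (Finset.mem_range.2 hk)
    rw [ex_mul]
    rcases ex_cases (cell N x) k with h1 | h1 <;> rcases ex_cases γ k with h2 | h2 <;>
      simp [h1, h2] at hne ⊢

lemma measurable_cell (N : ℕ) : Measurable (cell N) := by
  unfold cell
  apply measurable_pi_lambda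
  intro k
  exact Measurable.ite (measurableSet_lt (measurable_fract.comp
    (measurable_const.mul measurable_id)) measurable_const)
    measurable_const measurable_const

lemma integrable_walsh (j : ℕ) : Integrable (walsh j) unitMeasure :=
  Integrable.of_bound (measurable_walsh j).aestronglyMeasurable 1
    (Eventually.of_forall fun x => by rw [Real.norm_eq_abs, walsh_abs])

lemma measure_cell {N : ℕ} (γ : Gam N) :
    unitMeasure {x | cell N x = γ} = ((2:ENNReal) ^ N)⁻¹ := by
  have hm : MeasurableSet {x | cell N x = γ} := measurable_cell N (measurableSet_singleton γ)
  have h1 : ∫ x, (∑ j ∈ Finset.range (2 ^ N), WW j (ex γ) * walsh j x) ∂unitMeasure = 1 := by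
    rw [integral_finsetSum]
    · simp only [integral_const_mul, integral_walsh_ite]
      simp [WW_zero]
    · intro j _
      exact (integrable_walsh j).const_mul _
  have h2 : ∫ x, (∑ j ∈ Finset.range (2 ^ N), WW j (ex γ) * walsh j x) ∂unitMeasure
      = unitMeasure.real {x | cell N x = γ} * 2 ^ N := by
    simp only [dirichlet_cell]
    rw [show (fun x => if cell N x = γ then (2:ℝ) ^ N else 0) =
      Set.indicator {x | cell N x = γ} (fun _ => (2:ℝ) ^ N) by
        funext x; simp [Set.indicator_apply]]
    rw [integral_indicator_const _ hm, smul_eq_mul]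
  have h3 : unitMeasure.real {x | cell N x = γ} = (2 ^ N)⁻¹ := by
    rw [h1] at h2
    exact eq_inv_of_mul_eq_one_left h2.symm
  rw [← ofReal_measureReal, h3, ENNReal.ofReal_inv_of_pos (by positivity),
    ENNReal.ofReal_pow (by norm_num)]
  simp

/-- The tuple of cells in the coordinates from `B`. -/
def cellB {d : ℕ} (B : Finset (Fin d)) (N : ℕ) (x : Fin d → ℝ) : (↥B → Gam N) :=
  fun i => cell N (x i)

lemma measurable_cellB {d : ℕ} (B : Finset (Fin d)) (N : ℕ) : Measurable (cellB B N) := by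
  apply measurable_pi_lambda
  intro i
  exact (measurable_cell N).comp (measurable_pi_apply _)

lemma measure_cellB {d : ℕ} (B : Finset (Fin d)) (N : ℕ) (y : ↥B → Gam N) :
    (cubeMeasure d).real {x | cellB B N x = y} = ((2 ^ N) ^ B.card)⁻¹ := by
  have h1 : {x | cellB B N x = y} = Set.univ.pi (fun i : Fin d =>
      if h : i ∈ B then {u | cell N u = y ⟨i, h⟩} else Set.univ) := by
    ext x
    simp only [Set.mem_pi, Set.mem_univ, true_imp_iff]
    constructor
    · intro h i
      split_ifs with hi
      · exact congrFun h ⟨i, hi⟩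
      · trivial
    · intro h
      funext i
      have := h i
      rw [dif_pos i.2] at this
      exact this
  rw [Measure.real, h1, cubeMeasure_eq, Measure.pi_pi]
  have h2 : ∀ i : Fin d, unitMeasure (if h : i ∈ B then {u | cell N u = y ⟨i, h⟩} else Set.univ)
      = if i ∈ B then ((2:ENNReal) ^ N)⁻¹ else 1 := by
    intro i
    split_ifs with hi
    · exact measure_cell _
    · simp
  simp only [h2]
  rw [Finset.prod_ite]
  simp [ENNReal.toReal_inv]

lemma measure_cellB_mem {d : ℕ} (B : Finset (Fin d)) (N : ℕ) (S : Finset (↥B → Gam N)) :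
    (cubeMeasure d).real {x | cellB B N x ∈ S} = S.card * ((2 ^ N) ^ B.card)⁻¹ := by
  have h1 : {x | cellB B N x ∈ S} = ⋃ y ∈ S, {x | cellB B N x = y} := by
    ext x; simp
  rw [h1, measureReal_biUnion_finset]
  · simp [measure_cellB]
  · intro a _ b _ hab
    rw [Function.onFun, Set.disjoint_left]
    intro x hx hx'
    exact hab (hx.symm.trans hx')
  · intro y _
    exact measurable_cellB B N (measurableSet_singleton y)

lemma logSum_mono : Monotone logSum := by
  intro a b h
  unfold logSum
  apply Finset.sum_le_sum_of_subset_of_nonneg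
  · exact Finset.Icc_subset_Icc le_rfl (by omega)
  · intros; positivity

lemma logSum_zero : logSum 0 = 0 := by simp [logSum]

lemma logSum_nonneg (n : ℕ) : 0 ≤ logSum n := by
  unfold logSum; positivity

lemma logSum_succ {n : ℕ} (hn : 1 ≤ n) : logSum (n + 1) = logSum n + 1 / n := by
  unfold logSum
  obtain ⟨m, rfl⟩ : ∃ m, n = m + 1 := ⟨n - 1, by omega⟩
  simp only [Nat.add_sub_cancel]
  rw [Finset.sum_Icc_succ_top (by omega)]

lemma logSum_sub_le {K : ℕ} (hK : 1 ≤ K) (r : ℕ) :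
    logSum (K + r) - logSum K ≤ r / K := by
  induction r with
  | zero => simp
  | succ r ih =>
    rw [← add_assoc, logSum_succ (by omega)]
    have hK' : (0:ℝ) < K := by exact_mod_cast hK
    have : (1:ℝ) / ((K + r : ℕ) : ℝ) ≤ 1 / K := by
      apply one_div_le_one_div_of_le hK'
      push_cast; linarith [(Nat.cast_nonneg r : (0:ℝ) ≤ r)]
    push_cast at this ⊢
    rw [add_div]; linarith

/-- Unnormalised Nörlund logarithmic kernel on sign sequences. -/
def HH (n : ℕ) (s : ℕ → ℝ) : ℝ := ∑ j ∈ Finset.range n, logSum (n - j) * WW j s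

/-- Block coefficients of the kernel. -/
def rho (n m a : ℕ) : ℝ :=
  ∑ b ∈ Finset.range (2 ^ m), (logSum (n - (2 ^ (m+1) * a + b)) -
    logSum (n - (2 ^ (m+1) * a + (2 ^ m + b))))

lemma sum_range_blocks (q A : ℕ) (f : ℕ → ℝ) :
    ∑ j ∈ Finset.range (q * A), f j =
      ∑ a ∈ Finset.range A, ∑ b ∈ Finset.range q, f (q * a + b) := by
  induction A with
  | zero => simp
  | succ A ih => rw [mul_add, mul_one, Finset.sum_range_add, ih, Finset.sum_range_succ]

lemma HH_eq {n m A : ℕ} (hn : n ≤ 2 ^ (m+1) * A) {s : ℕ → ℝ} (h1 : ∀ k < m, s k = 1)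
    (h2 : s m = -1) :
    HH n s = ∑ a ∈ Finset.range A, rho n m a * WW a (fun k => s (m + 1 + k)) := by
  have e1 : HH n s = ∑ j ∈ Finset.range (2 ^ (m+1) * A), logSum (n - j) * WW j s := by
    unfold HH
    apply Finset.sum_subset
    · intro j hj
      simp only [Finset.mem_range] at hj ⊢
      omega
    · intro j _ hj
      simp only [Finset.mem_range, not_lt] at hj
      rw [Nat.sub_eq_zero_of_le hj, logSum_zero, zero_mul]
  rw [e1, sum_range_blocks]
  apply Finset.sum_congr rfl
  intro a _
  have hb : ∀ b < 2 ^ m, WW b s = 1 := by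
    intro b hb
    rw [WW_congr hb h1]
    simp [WW]
  rw [show Finset.range (2 ^ (m+1)) = Finset.range (2 ^ m + 2 ^ m) by rw [pow_succ, mul_two],
    Finset.sum_range_add, rho, Finset.sum_sub_distrib, sub_mul, Finset.sum_mul, Finset.sum_mul,
    sub_eq_add_neg, ← Finset.sum_neg_distrib]
  congr 1
  · apply Finset.sum_congr rfl
    intro b hb'
    have hb' := Finset.mem_range.1 hb'
    rw [WW_block (m+1) a (by rw [pow_succ]; omega), hb b hb', one_mul]
  · apply Finset.sum_congr rfl
    intro b hb'
    have hb' := Finset.mem_range.1 hb'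
    rw [WW_block (m+1) a (by rw [pow_succ]; omega), WW_top m hb', hb b hb', h2]
    ring

lemma rho_top {n m a n1 : ℕ} (hn : n = 2 ^ (m+1) * a + 2 ^ m + n1) (h1 : n1 ≤ 2 ^ m) :
    ((2:ℝ) ^ m - n1) * logSum (n1 + 1) ≤ rho n m a := by
  unfold rho
  have e : ((2:ℝ) ^ m - n1) * logSum (n1 + 1) =
      ∑ b ∈ Finset.Ico n1 (2 ^ m), logSum (n1 + 1) := by
    rw [Finset.sum_const, Nat.card_Ico, nsmul_eq_mul, Nat.cast_sub h1]; push_cast; ring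
  rw [e]
  calc _ ≤ ∑ b ∈ Finset.Ico n1 (2 ^ m), (logSum (n - (2 ^ (m+1) * a + b)) -
      logSum (n - (2 ^ (m+1) * a + (2 ^ m + b)))) := by
        apply Finset.sum_le_sum
        intro b hb
        rw [Finset.mem_Ico] at hb
        have : n - (2 ^ (m+1) * a + (2 ^ m + b)) = 0 := by omega
        rw [this, logSum_zero, sub_zero]
        apply logSum_mono
        omega
    _ ≤ _ := by
        apply Finset.sum_le_sum_of_subset_of_nonneg
        · intro b; simp
        · intro b _ _
          rw [sub_nonneg]
          apply logSum_mono; omega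

lemma rho_nonneg (n m a : ℕ) : 0 ≤ rho n m a := by
  unfold rho
  apply Finset.sum_nonneg
  intro b _
  rw [sub_nonneg]
  have hp : 1 ≤ 2 ^ m := Nat.one_le_two_pow
  apply logSum_mono; omega

lemma rho_le {n m a i : ℕ} (hn : 2 ^ (m+1) * (a + (i + 1)) + 2 ^ m ≤ n) :
    rho n m a ≤ 2 ^ m / (i + 1) := by
  unfold rho
  have key : ∀ b ∈ Finset.range (2 ^ m), (logSum (n - (2 ^ (m+1) * a + b)) -
      logSum (n - (2 ^ (m+1) * a + (2 ^ m + b)))) ≤ 1 / (i + 1) := by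
    intro b hb
    rw [Finset.mem_range] at hb
    have hp : 1 ≤ 2 ^ m := Nat.one_le_two_pow
    have e2 : 2 ^ (m+1) * (a + (i + 1)) = 2 ^ (m+1) * a + 2 * (2 ^ m * i) + 2 * 2 ^ m := by
      rw [pow_succ]; ring
    set K := n - (2 ^ (m+1) * a + (2 ^ m + b)) with hK
    have hKge : 2 ^ m * i + 2 ^ m ≤ K := by omega
    have e : n - (2 ^ (m+1) * a + b) = K + 2 ^ m := by omega
    rw [e]
    refine (logSum_sub_le (by omega) _).trans ?_
    have hKR : (2:ℝ) ^ m * (i + 1) ≤ K := by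
      have : ((2 ^ m * i + 2 ^ m : ℕ) : ℝ) ≤ K := by exact_mod_cast hKge
      push_cast at this; linarith
    have hi : (0:ℝ) < i + 1 := by positivity
    have hpR : (0:ℝ) < 2 ^ m := by positivity
    rw [div_le_div_iff₀ (lt_of_lt_of_le (by positivity) hKR) hi]
    push_cast; linarith
  calc _ ≤ ∑ b ∈ Finset.range (2 ^ m), (1:ℝ) / (i + 1) := Finset.sum_le_sum key
    _ = _ := by simp; ring

lemma sum_inv_sq (A : ℕ) : ∑ i ∈ Finset.range A, (1:ℝ) / (i + 1) ^ 2 ≤ 2 := by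
  have key : ∀ A : ℕ, ∑ i ∈ Finset.range (A + 1), (1:ℝ) / (i + 1) ^ 2 ≤ 2 - 1 / ((A:ℝ) + 1) := by
    intro A
    induction A with
    | zero => norm_num
    | succ A ih =>
      rw [Finset.sum_range_succ]
      have hA : (0:ℝ) ≤ A := Nat.cast_nonneg A
      have : (1:ℝ) / (A + 1 + 1) ^ 2 ≤ 1 / (A + 1) - 1 / (A + 1 + 1) := by
        rw [show (1:ℝ) / (A + 1) - 1 / (A + 1 + 1) = 1/((A+1)*(A+1+1)) by field_simp; ring]
        apply one_div_le_one_div_of_le (by positivity)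
        nlinarith
      push_cast
      linarith
  cases A with
  | zero => norm_num
  | succ A =>
    have := key A
    have h : (0:ℝ) ≤ 1 / ((A:ℝ) + 1) := by positivity
    linarith

lemma sum_rho_sq {n m a0 : ℕ} (hn : 2 ^ (m+1) * a0 + 2 ^ m ≤ n) :
    ∑ a ∈ Finset.range a0, rho n m a ^ 2 ≤ 2 * (2 ^ m) ^ 2 := by
  rw [← Finset.sum_range_reflect]
  calc _ ≤ ∑ i ∈ Finset.range a0, ((2:ℝ) ^ m) ^ 2 * (1 / ((i:ℝ) + 1) ^ 2) := by
        apply Finset.sum_le_sum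
        intro i hi
        rw [Finset.mem_range] at hi
        have : rho n m (a0 - 1 - i) ≤ 2 ^ m / (i + 1) := by
          apply rho_le
          rwa [show a0 - 1 - i + (i + 1) = a0 by omega]
        calc _ ≤ ((2:ℝ) ^ m / (i + 1)) ^ 2 := pow_le_pow_left₀ (rho_nonneg _ _ _) this 2
          _ = _ := by rw [div_pow]; ring
    _ = ((2:ℝ) ^ m) ^ 2 * ∑ i ∈ Finset.range a0, (1 / ((i:ℝ) + 1) ^ 2) := by rw [Finset.mul_sum]
    _ ≤ ((2:ℝ) ^ m) ^ 2 * 2 := by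
        apply mul_le_mul_of_nonneg_left (sum_inv_sq a0) (by positivity)
    _ = _ := by ring

/-- Sign vectors with first `m` entries `1` and entry number `m` equal to `-1`. -/
def IS (N m : ℕ) : Finset (Gam N) :=
  Fintype.piFinset (fun k : Fin N => if (k : ℕ) < m then {1} else if (k : ℕ) = m then {-1}
    else Finset.univ)

lemma mem_IS {N m : ℕ} {γ : Gam N} :
    γ ∈ IS N m ↔ ∀ k : Fin N, ((k : ℕ) < m → γ k = 1) ∧ ((k : ℕ) = m → γ k = -1) := by
  simp only [IS, Fintype.mem_piFinset]
  apply forall_congr'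
  intro k
  split_ifs with h1 h2
  · simp [h1]; omega
  · simp [h2]
  · simp [h1, h2, Int.units_eq_one_or]

lemma card_IS (m r : ℕ) : (IS (m + 1 + r) m).card = 2 ^ r := by
  simp only [IS, Fintype.card_piFinset]
  have : ∀ k : Fin (m + 1 + r), (if (k : ℕ) < m then ({1} : Finset ℤˣ) else
      if (k : ℕ) = m then {-1} else Finset.univ).card =
      (fun k : ℕ => if k < m + 1 then 1 else 2) (k : ℕ) := by
    intro k
    have hc : Fintype.card ℤˣ = 2 := by decide
    split_ifs <;> simp [hc] <;> omega
  rw [Finset.prod_congr rfl (fun k _ => this k),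
    Fin.prod_univ_eq_prod_range (fun k : ℕ => if k < m + 1 then 1 else 2), Finset.prod_range_add]
  have h1 : ∏ x ∈ Finset.range (m+1), (if x < m + 1 then 1 else 2) = 1 := by
    apply Finset.prod_eq_one
    intro x hx
    simp only [Finset.mem_range] at hx
    simp [hx]
  have h2 : ∀ x ∈ Finset.range r, (if m + 1 + x < m + 1 then 1 else 2) = 2 := by
    intro x _
    rw [if_neg (by omega)]
  rw [h1, Finset.prod_congr rfl h2]
  simp

lemma sum_IS {m r c : ℕ} (hc : c ≠ 0) (hcr : c < 2 ^ r) :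
    ∑ γ ∈ IS (m + 1 + r) m, WW c (fun k => ex γ (m + 1 + k)) = 0 := by
  obtain ⟨k0, hk0⟩ := Nat.exists_testBit_of_ne_zero hc
  have hk0r : k0 < r := by
    by_contra h
    push Not at h
    rw [Nat.testBit_lt_two_pow (lt_of_lt_of_le hcr (Nat.pow_le_pow_right (by norm_num) h))] at hk0
    exact absurd hk0 (by simp)
  set e : Gam (m + 1 + r) := fun k => if (k : ℕ) = m + 1 + k0 then -1 else 1 with he
  have hee : e * e = 1 := by
    funext k; simp only [he, Pi.mul_apply]; split_ifs <;> simp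
  have hW : WW c (fun k => ex e (m + 1 + k)) = -1 := by
    rw [WW_eq hcr, Finset.prod_eq_single k0]
    · rw [if_pos hk0]
      simp only [ex, he]
      rw [dif_pos (by omega)]; simp
    · intro k hk hne
      rw [Finset.mem_range] at hk
      simp only [ex, he]
      rw [dif_pos (by omega)]; simp [hne]
    · intro h; exact absurd (Finset.mem_range.2 hk0r) h
  have hmem : ∀ γ ∈ IS (m + 1 + r) m, γ * e ∈ IS (m + 1 + r) m := by
    intro γ hγ
    rw [mem_IS] at hγ ⊢
    intro k
    refine ⟨fun h => ?_, fun h => ?_⟩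
    · simp only [Pi.mul_apply, he]
      rw [if_neg (by omega), mul_one]; exact (hγ k).1 h
    · simp only [Pi.mul_apply, he]
      rw [if_neg (by omega), mul_one]; exact (hγ k).2 h
  have hneg : ∑ γ ∈ IS (m + 1 + r) m, WW c (fun k => ex γ (m + 1 + k)) =
      ∑ γ ∈ IS (m + 1 + r) m, - WW c (fun k => ex γ (m + 1 + k)) := by
    apply Finset.sum_bij' (fun γ _ => γ * e) (fun γ _ => γ * e) hmem hmem
    · intro γ _; rw [mul_assoc, hee, mul_one]
    · intro γ _; rw [mul_assoc, hee, mul_one]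
    · intro γ _
      rw [ex_mul, WW_mul c (fun k => ex γ (m + 1 + k)) (fun k => ex e (m + 1 + k)), hW]
      ring
  rw [Finset.sum_neg_distrib] at hneg
  linarith

lemma second_moment {m r a0 : ℕ} (ha : a0 ≤ 2 ^ r) (c : ℕ → ℝ) :
    ∑ γ ∈ IS (m + 1 + r) m,
      (∑ a ∈ Finset.range a0, c a * WW a (fun k => ex γ (m + 1 + k))) ^ 2 =
    2 ^ r * ∑ a ∈ Finset.range a0, c a ^ 2 := by
  have h1 : ∀ γ ∈ IS (m + 1 + r) m,
      (∑ a ∈ Finset.range a0, c a * WW a (fun k => ex γ (m + 1 + k))) ^ 2 =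
      ∑ a ∈ Finset.range a0, ∑ b ∈ Finset.range a0, c a * c b *
        WW (a ^^^ b) (fun k => ex γ (m + 1 + k)) := by
    intro γ _
    rw [sq, Finset.sum_mul_sum]
    apply Finset.sum_congr rfl
    intro a _
    apply Finset.sum_congr rfl
    intro b _
    rw [← WW_xor a b (fun k => ex_sq γ _)]; ring
  rw [Finset.sum_congr rfl h1, Finset.sum_comm, Finset.mul_sum]
  apply Finset.sum_congr rfl
  intro a hma
  rw [Finset.sum_comm, Finset.sum_eq_single a]
  · simp [WW_zero, card_IS]; ring
  · intro b hmb hne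
    rw [← Finset.mul_sum, sum_IS, mul_zero]
    · rw [Ne, Nat.xor_eq_zero_iff]; exact hne.symm
    · rw [Finset.mem_range] at hma hmb
      exact Nat.xor_lt_two_pow (by omega) (by omega)
  · intro h; exact absurd hma h

open Classical in
lemma kernel_lower {m r a0 n1 n : ℕ} (hn : n = 2 ^ (m+1) * a0 + 2 ^ m + n1)
    (h1 : 2 * n1 ≤ 2 ^ m) (hr : n ≤ 2 ^ (m + 1 + r)) (h8 : 8 ≤ logSum (n1 + 1)) :
    2 ^ r ≤ 2 * ((IS (m + 1 + r) m).filter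
      (fun γ => 2 ^ m / 4 * logSum (n1 + 1) ≤ |HH n (ex γ)|)).card := by
  set I := IS (m + 1 + r) m with hI
  have hp : 1 ≤ 2 ^ m := Nat.one_le_two_pow
  have ha0 : a0 < 2 ^ r := by
    have : 2 ^ (m+1) * a0 < 2 ^ (m+1) * 2 ^ r := by rw [← pow_add]; omega
    exact lt_of_mul_lt_mul_left this (by positivity)
  set E : Gam (m + 1 + r) → ℝ := fun γ =>
    ∑ a ∈ Finset.range a0, rho n m a * WW a (fun k => ex γ (m + 1 + k)) with hE
  have hpR : (0:ℝ) < 2 ^ m := by positivity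
  have hmom : ∑ γ ∈ I, E γ ^ 2 ≤ 2 ^ r * (2 * (2 ^ m) ^ 2) := by
    rw [hI, second_moment ha0.le]
    exact mul_le_mul_of_nonneg_left (sum_rho_sq (by omega)) (by positivity)
  have hgood : ∀ γ ∈ I, |E γ| ≤ 2 * 2 ^ m → 2 ^ m / 4 * logSum (n1 + 1) ≤ |HH n (ex γ)| := by
    intro γ hγ hEγ
    rw [hI, mem_IS] at hγ
    have e1 : HH n (ex γ) = E γ + rho n m a0 * WW a0 (fun k => ex γ (m + 1 + k)) := by
      rw [HH_eq (n := n) (m := m) (A := a0 + 1), Finset.sum_range_succ]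
      · rw [mul_add, mul_one, hn, pow_succ]; omega
      · intro k hk
        simp only [ex]
        rw [dif_pos (by omega), (hγ ⟨k, by omega⟩).1 hk]; simp
      · simp only [ex]
        rw [dif_pos (by omega), (hγ ⟨m, by omega⟩).2 rfl]; simp
    have e2 : |rho n m a0 * WW a0 (fun k => ex γ (m + 1 + k))| = rho n m a0 := by
      rw [abs_mul, WW_abs _ (fun k => ex_sq γ _), mul_one, abs_of_nonneg (rho_nonneg _ _ _)]
    have e3 : rho n m a0 - |E γ| ≤ |HH n (ex γ)| := by
      have := abs_sub_abs_le_abs_sub (rho n m a0 * WW a0 (fun k => ex γ (m + 1 + k))) (- E γ)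
      rw [abs_neg, sub_neg_eq_add, e2, add_comm, ← e1] at this
      exact this
    have e4 := rho_top hn (by omega : n1 ≤ 2 ^ m)
    have e5 : (2:ℝ) ^ m / 2 ≤ 2 ^ m - n1 := by
      have : ((2 * n1 : ℕ) : ℝ) ≤ ((2 ^ m : ℕ) : ℝ) := by exact_mod_cast h1
      push_cast at this; linarith
    nlinarith
  set Bd := I.filter (fun γ => ¬ |E γ| ≤ 2 * 2 ^ m) with hBd
  have hbad : (Bd.card : ℝ) * (2 * 2 ^ m) ^ 2 ≤ 2 ^ r * (2 * (2 ^ m) ^ 2) := by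
    refine le_trans ?_ hmom
    rw [← nsmul_eq_mul, ← Finset.sum_const]
    calc _ ≤ ∑ γ ∈ Bd, E γ ^ 2 := by
          apply Finset.sum_le_sum
          intro γ hγ
          rw [hBd, Finset.mem_filter] at hγ
          rw [← sq_abs (E γ)]
          exact pow_le_pow_left₀ (by positivity) (le_of_not_ge hγ.2) 2
      _ ≤ _ := Finset.sum_le_sum_of_subset_of_nonneg (Finset.filter_subset _ _)
          (fun _ _ _ => sq_nonneg _)
  have hbad2 : 2 * Bd.card ≤ 2 ^ r := by
    have : (2 * Bd.card : ℝ) ≤ 2 ^ r := by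
      have hp2 : (0:ℝ) < 2 * (2 ^ m) ^ 2 := by positivity
      refine le_of_mul_le_mul_right ?_ hp2
      nlinarith
    exact_mod_cast this
  have hsub : I.filter (fun γ => |E γ| ≤ 2 * 2 ^ m) ⊆
      I.filter (fun γ => 2 ^ m / 4 * logSum (n1 + 1) ≤ |HH n (ex γ)|) := by
    intro γ hγ
    rw [Finset.mem_filter] at hγ ⊢
    exact ⟨hγ.1, hgood γ hγ.1 hγ.2⟩
  have hcard := Finset.card_le_card hsub
  have hsum := Finset.card_filter_add_card_filter_not (s := I) (fun γ => |E γ| ≤ 2 * 2 ^ m)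
  rw [hI, card_IS, ← hI, ← hBd] at hsum
  omega

open Classical in
lemma cover_greedy {G : Type*} [CommGroup G] [Fintype G] (E : Finset G) (M : ℕ) :
    ∃ T : Finset G, T.card ≤ M ∧
      (((Finset.univ.filter (fun x => ∀ t ∈ T, x * t ∉ E)).card : ℕ) : ℝ) ≤
        (1 - E.card / Fintype.card G) ^ M * Fintype.card G := by
  have hG : (0:ℝ) < Fintype.card G := by exact_mod_cast Fintype.card_pos
  induction M with
  | zero => exact ⟨∅, by simp, by simp⟩
  | succ M ih =>
    obtain ⟨T, hT, hV⟩ := ih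
    set V := Finset.univ.filter (fun x => ∀ t ∈ T, x * t ∉ E) with hVdef
    have hsum : ∑ t : G, ((V.filter (fun x => x * t ∈ E)).card : ℝ) = V.card * E.card := by
      simp only [Finset.card_filter, Nat.cast_sum]
      rw [Finset.sum_comm]
      have : ∀ x ∈ V, ∑ t : G, (((if x * t ∈ E then 1 else 0 : ℕ)) : ℝ) = E.card := by
        intro x _
        rw [← Equiv.sum_comp (Equiv.mulLeft x⁻¹)]
        simp
      rw [Finset.sum_congr rfl this]
      simp
    obtain ⟨t, -, ht⟩ : ∃ t ∈ (Finset.univ : Finset G),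
        (V.card * E.card / Fintype.card G : ℝ) ≤ ((V.filter (fun x => x * t ∈ E)).card : ℝ) := by
      apply Finset.exists_le_of_sum_le (Finset.univ_nonempty)
      rw [hsum]
      simp
      rw [mul_div_cancel₀ _ hG.ne']
    refine ⟨insert t T, (Finset.card_insert_le _ _).trans (by omega), ?_⟩
    have e1 : Finset.univ.filter (fun x => ∀ t' ∈ insert t T, x * t' ∉ E) =
        V.filter (fun x => ¬ x * t ∈ E) := by
      ext x
      simp [hVdef, and_comm]
    have e2 := Finset.card_filter_add_card_filter_not (s := V) (fun x => x * t ∈ E)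
    have e3 : ((V.filter (fun x => x * t ∈ E)).card : ℝ) +
      ((V.filter (fun x => ¬ x * t ∈ E)).card : ℝ) = V.card := by exact_mod_cast e2
    rw [e1]
    have hE : (E.card : ℝ) / Fintype.card G ≤ 1 := by
      rw [div_le_one hG]; exact_mod_cast Finset.card_le_univ E
    calc ((V.filter (fun x => ¬ x * t ∈ E)).card : ℝ)
        ≤ V.card - V.card * E.card / Fintype.card G := by linarith
      _ = (1 - E.card / Fintype.card G) * V.card := by ring
      _ ≤ (1 - E.card / Fintype.card G) *
          ((1 - E.card / Fintype.card G) ^ M * Fintype.card G) :=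
          mul_le_mul_of_nonneg_left hV (by linarith)
      _ = _ := by ring

open Classical in
lemma sign_half {G : Type*} [Fintype G] (T : Finset G) (a : G → ℝ) (t0 : G) (ht0 : t0 ∈ T)
    (lam : ℝ) (h : lam ≤ |a t0|) :
    Fintype.card (G → ℤˣ) ≤ 2 * (Finset.univ.filter (fun ε : G → ℤˣ =>
      lam ≤ |∑ t ∈ T, ((ε t : ℤ) : ℝ) * a t|)).card := by
  set S : (G → ℤˣ) → ℝ := fun ε => ∑ t ∈ T, ((ε t : ℤ) : ℝ) * a t with hS
  set fl : (G → ℤˣ) → (G → ℤˣ) := fun ε => Function.update ε t0 (- ε t0) with hfl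
  have hinj : Function.Injective fl := by
    intro ε ε' hh
    have h1 : ∀ ε, fl (fl ε) = ε := by intro ε; simp [hfl]
    rw [← h1 ε, ← h1 ε', hh]
  have hkey : ∀ ε, ¬ lam ≤ |S ε| → lam ≤ |S (fl ε)| := by
    intro ε hε
    have hdec : ∀ ε, S ε = ((ε t0 : ℤ) : ℝ) * a t0 + ∑ t ∈ T.erase t0, ((ε t : ℤ) : ℝ) * a t := by
      intro ε
      rw [hS]
      exact (Finset.add_sum_erase T (fun t => ((ε t : ℤ) : ℝ) * a t) ht0).symm
    have e2 : ∑ t ∈ T.erase t0, ((fl ε t : ℤ) : ℝ) * a t =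
        ∑ t ∈ T.erase t0, ((ε t : ℤ) : ℝ) * a t := by
      apply Finset.sum_congr rfl
      intro t ht
      simp [hfl, Function.update_of_ne (Finset.ne_of_mem_erase ht)]
    have e3 : ((fl ε t0 : ℤ) : ℝ) = - ((ε t0 : ℤ) : ℝ) := by simp [hfl]
    have h1 := hdec ε
    have h2 := hdec (fl ε)
    rw [e2, e3] at h2
    have habs : |((ε t0 : ℤ) : ℝ) * a t0| = |a t0| := by
      rcases Int.units_eq_one_or (ε t0) with h | h <;> simp [h]
    have h3 : ((ε t0 : ℤ) : ℝ) * a t0 = (S ε - S (fl ε)) / 2 := by rw [h1, h2]; ring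
    have h4 : |S ε - S (fl ε)| ≤ |S ε| + |S (fl ε)| := abs_sub _ _
    rw [h3, abs_div, abs_of_pos (by norm_num : (0:ℝ) < 2)] at habs
    push Not at hε
    linarith
  have hc := Finset.card_filter_add_card_filter_not (s := (Finset.univ : Finset (G → ℤˣ)))
    (fun ε => lam ≤ |S ε|)
  have hle : (Finset.univ.filter (fun ε => ¬ lam ≤ |S ε|)).card ≤
      (Finset.univ.filter (fun ε => lam ≤ |S ε|)).card := by
    apply Finset.card_le_card_of_injOn fl
    · intro ε hε
      simp only [Finset.coe_filter, Finset.mem_univ, true_and] at hε ⊢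
      exact hkey ε hε
    · exact hinj.injOn
  rw [Finset.card_univ] at hc
  change _ ≤ 2 * (Finset.univ.filter (fun ε => lam ≤ |S ε|)).card
  omega

open Classical in
lemma signed_cover {G : Type*} [CommGroup G] [Fintype G] (h : G → ℝ) (lam : ℝ) (M : ℕ)
    (hM : Fintype.card G ≤ M * (Finset.univ.filter (fun x => lam ≤ |h x|)).card) :
    ∃ (T : Finset G) (ε : G → ℤˣ), T.card ≤ M ∧
      Fintype.card G ≤ 4 * (Finset.univ.filter (fun x =>
        lam ≤ |∑ t ∈ T, ((ε t : ℤ) : ℝ) * h (x * t)|)).card := by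
  set E := Finset.univ.filter (fun x => lam ≤ |h x|) with hE
  obtain ⟨T, hT, hV⟩ := cover_greedy E M
  have hG : (0:ℝ) < Fintype.card G := by exact_mod_cast Fintype.card_pos
  have hhalf : (1 - (E.card : ℝ) / Fintype.card G) ^ M ≤ 1 / 2 := by
    have hE1 : (E.card : ℝ) / Fintype.card G ≤ 1 := by
      rw [div_le_one hG]; exact_mod_cast Finset.card_le_univ E
    have h1 : 1 - (E.card : ℝ) / Fintype.card G ≤ Real.exp (- ((E.card : ℝ) / Fintype.card G)) :=
      Real.one_sub_le_exp_neg _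
    calc _ ≤ Real.exp (- ((E.card : ℝ) / Fintype.card G)) ^ M :=
          pow_le_pow_left₀ (by linarith) h1 M
      _ = Real.exp (- (M * E.card / Fintype.card G)) := by
          rw [← Real.exp_nat_mul]; congr 1; ring
      _ ≤ Real.exp (-1) := by
          apply Real.exp_le_exp.2
          rw [neg_le_neg_iff, le_div_iff₀ hG, one_mul]
          exact_mod_cast hM
      _ ≤ 1 / 2 := by
          rw [Real.exp_neg, ← one_div]
          apply one_div_le_one_div_of_le (by norm_num)
          have := Real.add_one_le_exp (1:ℝ)
          linarith
  set V := Finset.univ.filter (fun x => ∀ t ∈ T, x * t ∉ E) with hVdef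
  set C := Finset.univ.filter (fun x => ¬ ∀ t ∈ T, x * t ∉ E) with hCdef
  have hVC : V.card + C.card = Fintype.card G := by
    rw [hVdef, hCdef, Finset.card_filter_add_card_filter_not, Finset.card_univ]
  have hVle : 2 * V.card ≤ Fintype.card G := by
    have : (2 * V.card : ℝ) ≤ Fintype.card G := by nlinarith
    exact_mod_cast this
  have hdouble : ∑ ε : G → ℤˣ, (Finset.univ.filter (fun x =>
        lam ≤ |∑ t ∈ T, ((ε t : ℤ) : ℝ) * h (x * t)|)).card =
      ∑ x : G, (Finset.univ.filter (fun ε : G → ℤˣ =>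
        lam ≤ |∑ t ∈ T, ((ε t : ℤ) : ℝ) * h (x * t)|)).card := by
    simp only [Finset.card_filter]
    exact Finset.sum_comm
  have hlow : C.card * Fintype.card (G → ℤˣ) ≤ 2 * ∑ ε : G → ℤˣ, (Finset.univ.filter (fun x =>
        lam ≤ |∑ t ∈ T, ((ε t : ℤ) : ℝ) * h (x * t)|)).card := by
    rw [hdouble, Finset.mul_sum, ← smul_eq_mul, ← Finset.sum_const]
    refine le_trans ?_ (Finset.sum_le_sum_of_subset (Finset.subset_univ C))
    apply Finset.sum_le_sum
    intro x hx
    rw [hCdef, Finset.mem_filter] at hx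
    obtain ⟨-, hx⟩ := hx
    push Not at hx
    obtain ⟨t0, ht0, hm⟩ := hx
    rw [hE, Finset.mem_filter] at hm
    exact sign_half T (fun t => h (x * t)) t0 ht0 lam hm.2
  by_contra hcon
  push Not at hcon
  have hlt : ∑ ε : G → ℤˣ, 4 * (Finset.univ.filter (fun x =>
        lam ≤ |∑ t ∈ T, ((ε t : ℤ) : ℝ) * h (x * t)|)).card <
        ∑ ε : G → ℤˣ, Fintype.card G :=
    Finset.sum_lt_sum_of_nonempty Finset.univ_nonempty (fun ε _ => hcon T ε hT)
  rw [← Finset.mul_sum, Finset.sum_const, Finset.card_univ, smul_eq_mul] at hlt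
  have : Fintype.card (G → ℤˣ) * Fintype.card G ≤ 2 * (C.card * Fintype.card (G → ℤˣ)) := by
    have : Fintype.card G ≤ 2 * C.card := by omega
    calc _ ≤ Fintype.card (G → ℤˣ) * (2 * C.card) := Nat.mul_le_mul_left _ this
      _ = _ := by ring
  omega

lemma logSum_eq_harmonic (n : ℕ) : logSum (n + 1) = (harmonic n : ℝ) := by
  rw [harmonic_eq_sum_Icc, logSum]
  simp

lemma log_le_logSum (n : ℕ) : Real.log (n + 1 : ℕ) ≤ logSum (n + 1) := by
  rw [logSum_eq_harmonic]; exact_mod_cast log_add_one_le_harmonic n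

lemma logSum_le (n : ℕ) : logSum (n + 1) ≤ 1 + Real.log n := by
  rw [logSum_eq_harmonic]; exact_mod_cast harmonic_le_one_add_log n

lemma one_le_log_four : (1:ℝ) ≤ Real.log 4 := by
  rw [show (4:ℝ) = 2 ^ 2 by norm_num, Real.log_pow]
  have := Real.log_two_gt_d9
  push_cast; linarith

lemma geom4 (ν : ℕ) : 3 * (∑ k ∈ Finset.range ν, 4 ^ k) + 1 = 4 ^ ν := by
  induction ν with
  | zero => simp
  | succ ν ih => rw [Finset.sum_range_succ, pow_succ]; omega

lemma pIdx_lt (A : ℕ) : pIdx A < 4 ^ (A + 1) := by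
  have := geom4 (A + 1)
  unfold pIdx; omega

lemma pIdx_ge (A : ℕ) : 4 ^ A ≤ pIdx A := by
  have := geom4 (A + 1)
  rw [pow_succ] at this
  unfold pIdx; omega

lemma pIdx_split {A ν : ℕ} (h : ν ≤ A) :
    pIdx A = 2 ^ (2 * ν + 1) * (2 * ∑ i ∈ Finset.range (A - ν), 4 ^ i) + 2 ^ (2 * ν) +
      ∑ k ∈ Finset.range ν, 4 ^ k := by
  unfold pIdx
  rw [show A + 1 = ν + 1 + (A - ν) by omega, Finset.sum_range_add, Finset.sum_range_succ,
    Finset.mul_sum, Finset.mul_sum]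
  have : ∀ i, 2 ^ (2 * ν + 1) * (2 * 4 ^ i) = 4 ^ (ν + 1 + i) := by
    intro i
    rw [pow_add, pow_add 4, pow_mul]; norm_num; ring
  simp only [this]
  rw [pow_mul]; norm_num; ring

/-- The normalised Nörlund kernel on sign vectors. -/
def kern (n : ℕ) {N : ℕ} (γ : Gam N) : ℝ := HH n (ex γ) / logSum n

lemma kern_ratio {b K : ℕ} (hK : 9 ≤ K) {ν : ℕ} (h1 : K ≤ ν) :
    1 / (8 * ((b:ℝ) + 3)) * 4 ^ ν ≤
    (2 ^ (2 * ν) / 4 * logSum ((∑ k ∈ Finset.range ν, 4 ^ k) + 1)) / logSum (pIdx ((b + 1) * K)) ∧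
    8 ≤ logSum ((∑ k ∈ Finset.range ν, 4 ^ k) + 1) := by
  set n1 := ∑ k ∈ Finset.range ν, 4 ^ k with hn1
  have hlog4 := one_le_log_four
  have hg := geom4 ν
  rw [← hn1] at hg
  have hKR : (9:ℝ) ≤ K := by exact_mod_cast hK
  have e1 : ((K:ℝ) - 1) * Real.log 4 ≤ logSum (n1 + 1) := by
    have h3 : 4 ^ (ν - 1) ≤ n1 + 1 := by
      have : 4 ^ ν = 4 ^ (ν - 1) * 4 := by rw [← pow_succ]; congr 1; omega
      omega
    have h4 : Real.log ((4:ℝ) ^ (ν - 1)) ≤ Real.log ((n1 + 1 : ℕ) : ℝ) := by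
      apply Real.log_le_log (by positivity)
      exact_mod_cast h3
    rw [Real.log_pow, Nat.cast_sub (by omega)] at h4
    have h5 := log_le_logSum n1
    have h6 : (K:ℝ) ≤ ν := by exact_mod_cast h1
    push_cast at h4 h5
    nlinarith
  have e2 : 8 ≤ logSum (n1 + 1) := by nlinarith
  refine ⟨?_, e2⟩
  have e3 : logSum (pIdx ((b + 1) * K)) ≤ (((b:ℝ) + 1) * K + 2) * Real.log 4 := by
    have hge := pIdx_ge ((b + 1) * K)
    have hpos : 0 < 4 ^ ((b + 1) * K) := by positivity
    obtain ⟨p, hp⟩ : ∃ p, pIdx ((b + 1) * K) = p + 1 := ⟨pIdx ((b + 1) * K) - 1, by omega⟩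
    have hlt := pIdx_lt ((b + 1) * K)
    rw [hp] at hlt ⊢
    refine (logSum_le p).trans ?_
    have : Real.log p ≤ Real.log ((4:ℝ) ^ ((b + 1) * K + 1)) := by
      rcases Nat.eq_zero_or_pos p with h0 | h0
      · rw [h0]; simp; positivity
      · apply Real.log_le_log (by exact_mod_cast h0)
        exact_mod_cast (by omega : p ≤ 4 ^ ((b + 1) * K + 1))
    rw [Real.log_pow] at this
    push_cast at this
    nlinarith
  have e4 : 0 < logSum (pIdx ((b + 1) * K)) := by
    have : logSum (n1 + 1) ≤ logSum (pIdx ((b+1) * K)) ∨ True := Or.inr trivial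
    have h2 : logSum 2 ≤ logSum (pIdx ((b+1) * K)) := by
      apply logSum_mono
      have : 4 ^ 1 ≤ 4 ^ ((b + 1) * K) := Nat.pow_le_pow_right (by norm_num) (by nlinarith)
      have := pIdx_ge ((b + 1) * K)
      omega
    have : logSum 2 = 1 := by simp [logSum]
    linarith
  rw [le_div_iff₀ e4, pow_mul]
  norm_num
  set l := logSum (pIdx ((b + 1) * K))
  set l1 := logSum (n1 + 1)
  have hb : (0:ℝ) ≤ b := Nat.cast_nonneg b
  have key : l ≤ 2 * (b + 3) * l1 := by
    have a1 : (((b:ℝ) + 1) * K + 2) ≤ 2 * (b + 3) * (K - 1) := by nlinarith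
    have a2 : 2 * ((b:ℝ) + 3) * ((K - 1) * Real.log 4) ≤ 2 * (b + 3) * l1 :=
      mul_le_mul_of_nonneg_left e1 (by positivity)
    nlinarith
  have h4 : (0:ℝ) < 4 ^ ν := by positivity
  have hb3 : (0:ℝ) < (b:ℝ) + 3 := by positivity
  rw [show ((b:ℝ) + 3)⁻¹ * (1 / 8) * 4 ^ ν * l = (4 ^ ν * l) / (8 * (b + 3)) by
    field_simp] 
  rw [div_le_iff₀ (by positivity)]
  nlinarith [mul_le_mul_of_nonneg_left key h4.le]

lemma oneD {b K : ℕ} (hK : 9 ≤ K) {ν : ℕ} (h1 : K ≤ ν) (h2 : ν ≤ (b + 1) * K) :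
    ∃ J ⊆ IS (2 * ((b + 1) * K) + 2) (2 * ν), 4 ^ ((b + 1) * K - ν) ≤ J.card ∧
      ∀ γ ∈ J, 1 / (8 * ((b:ℝ) + 3)) * 4 ^ ν ≤ |kern (pIdx ((b + 1) * K)) γ| := by
  classical
  obtain ⟨hr, h8⟩ := kern_ratio (b := b) hK h1
  set A := (b + 1) * K with hA
  have hN : 2 * A + 2 = 2 * ν + 1 + (2 * (A - ν) + 1) := by omega
  have hg := geom4 ν
  have hk := kernel_lower (m := 2 * ν) (r := 2 * (A - ν) + 1) (pIdx_split h2)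
    (by rw [pow_mul]; norm_num; omega)
    (by
      rw [← hN, show 2 * A + 2 = 2 * (A + 1) by ring, pow_mul]
      exact (pIdx_lt A).le) h8
  rw [hN]
  refine ⟨(IS (2 * ν + 1 + (2 * (A - ν) + 1)) (2 * ν)).filter (fun γ =>
    2 ^ (2 * ν) / 4 * logSum ((∑ k ∈ Finset.range ν, 4 ^ k) + 1) ≤ |HH (pIdx A) (ex γ)|),
    Finset.filter_subset _ _, ?_, ?_⟩
  · rw [pow_succ, pow_mul] at hk
    norm_num at hk
    rw [mul_comm] at hk
    exact Nat.le_of_mul_le_mul_left hk (by norm_num)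
  · intro γ hγ
    rw [Finset.mem_filter] at hγ
    refine hr.trans ?_
    rw [kern, abs_div, abs_of_nonneg (logSum_nonneg _)]
    exact div_le_div_of_nonneg_right hγ.2 (logSum_nonneg _)

lemma IS_disj {N m m' : ℕ} (hm : m < m') (hN : m < N) {γ : Gam N} (h : γ ∈ IS N m) :
    γ ∉ IS N m' := by
  intro h'
  rw [mem_IS] at h h'
  have e1 := (h ⟨m, hN⟩).2 rfl
  have e2 := (h' ⟨m, hN⟩).1 hm
  rw [e1] at e2
  exact absurd e2 (by decide)

open Classical in
lemma big_set {ι : Type*} [Fintype ι] (b K : ℕ) (hb : Fintype.card ι = b) (hb1 : 1 ≤ b)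
    (hK : 9 ≤ K) :
    K ^ (b - 1) * 4 ^ (b * ((b + 1) * K) - 2 * b * K) ≤
      (Finset.univ.filter (fun y : ι → Gam (2 * ((b + 1) * K) + 2) =>
        (1 / (8 * ((b:ℝ) + 3))) ^ b * 4 ^ (2 * b * K) ≤
          |∏ i, kern (pIdx ((b + 1) * K)) (y i)|)).card := by
  set A := (b + 1) * K with hA
  set c : ℝ := 1 / (8 * ((b:ℝ) + 3)) with hc
  have hJ : ∀ ν, ∃ J : Finset (Gam (2 * A + 2)), (K ≤ ν → ν ≤ A →
      J ⊆ IS (2 * A + 2) (2 * ν) ∧ 4 ^ (A - ν) ≤ J.card ∧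
      ∀ γ ∈ J, c * 4 ^ ν ≤ |kern (pIdx A) γ|) := by
    intro ν
    by_cases h : K ≤ ν ∧ ν ≤ A
    · obtain ⟨J, h1, h2, h3⟩ := oneD (b := b) hK h.1 h.2
      exact ⟨J, fun _ _ => ⟨h1, h2, h3⟩⟩
    · exact ⟨∅, fun h1 h2 => absurd ⟨h1, h2⟩ h⟩
  choose J hJ using hJ
  have : Nonempty ι := Fintype.card_pos_iff.1 (by omega)
  obtain ⟨i0⟩ := this
  set v : ({i : ι // i ≠ i0} → Fin K) → ι → ℕ := fun u i =>
    if h : i ≠ i0 then K + u ⟨i, h⟩ else 2 * b * K - ∑ j, (K + (u j : ℕ)) with hv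
  have hcard' : Fintype.card {i : ι // i ≠ i0} = b - 1 := by
    rw [Fintype.card_subtype_compl, hb]; simp
  have hR1 : ∀ u : {i : ι // i ≠ i0} → Fin K, (b - 1) * K ≤ ∑ j, (K + (u j : ℕ)) := by
    intro u
    rw [← hcard', ← Finset.card_univ, ← smul_eq_mul, ← Finset.sum_const]
    exact Finset.sum_le_sum (fun j _ => by omega)
  have hR2 : ∀ u : {i : ι // i ≠ i0} → Fin K, ∑ j, (K + (u j : ℕ)) ≤ (b - 1) * (2 * K) := by
    intro u
    rw [← hcard', ← Finset.card_univ, ← smul_eq_mul, ← Finset.sum_const]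
    exact Finset.sum_le_sum (fun j _ => by omega)
  obtain ⟨b', rfl⟩ : ∃ b', b = b' + 1 := ⟨b - 1, by omega⟩
  simp only [Nat.add_sub_cancel] at hR1 hR2 hcard' ⊢
  have hAe : A = b' * K + 2 * K := by rw [hA]; ring
  have hLe : 2 * (b' + 1) * K = b' * (2 * K) + 2 * K := by ring
  have hLe2 : b' * (2 * K) = b' * K + b' * K := by ring
  have hv1 : ∀ u i, K ≤ v u i ∧ v u i ≤ A := by
    intro u i
    simp only [hv]
    have h1 := hR1 u
    have h2 := hR2 u
    split_ifs with h
    · have := (u ⟨i, h⟩).2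
      constructor <;> omega
    · constructor <;> omega
  have hvsum : ∀ u, ∑ i, v u i = 2 * (b' + 1) * K := by
    intro u
    rw [← Finset.add_sum_erase _ _ (Finset.mem_univ i0)]
    have e1 : ∑ i ∈ Finset.univ.erase i0, v u i = ∑ j, (K + (u j : ℕ)) := by
      rw [Finset.sum_subtype (Finset.univ.erase i0) (p := fun i => i ≠ i0) (by simp)]
      apply Finset.sum_congr rfl
      intro j _
      simp only [hv]
      rw [dif_pos j.2]
    have e2 : v u i0 = 2 * (b' + 1) * K - ∑ j, (K + (u j : ℕ)) := by simp [hv]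
    rw [e1, e2]
    have h2 := hR2 u
    omega
  set U := (Finset.univ : Finset ({i : ι // i ≠ i0} → Fin K)).biUnion
    (fun u => Fintype.piFinset (fun i => J (v u i))) with hU
  have hUcard : K ^ b' * 4 ^ ((b' + 1) * A - 2 * (b' + 1) * K) ≤ U.card := by
    rw [hU, Finset.card_biUnion]
    · have e1 : K ^ b' = (Finset.univ : Finset ({i : ι // i ≠ i0} → Fin K)).card := by
        rw [Finset.card_univ, Fintype.card_fun, hcard']; simp
      rw [e1, ← smul_eq_mul, ← Finset.sum_const]
      apply Finset.sum_le_sum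
      intro u _
      rw [Fintype.card_piFinset]
      have e2 : (b' + 1) * A - 2 * (b' + 1) * K = ∑ i, (A - v u i) := by
        have : ∑ i, (A - v u i) + ∑ i, v u i = (b' + 1) * A := by
          rw [← Finset.sum_add_distrib, ← hb, ← Finset.card_univ, ← smul_eq_mul,
            ← Finset.sum_const]
          exact Finset.sum_congr rfl (fun i _ => Nat.sub_add_cancel (hv1 u i).2)
        rw [hvsum] at this
        omega
      rw [e2, ← Finset.prod_pow_eq_pow_sum]
      exact Finset.prod_le_prod' (fun i _ => (hJ (v u i) (hv1 u i).1 (hv1 u i).2).2.1)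
    · intro u _ u' _ hne
      rw [Function.onFun, Finset.disjoint_left]
      intro y hy hy'
      rw [Fintype.mem_piFinset] at hy hy'
      obtain ⟨j, hj⟩ := Function.ne_iff.1 hne
      have hvne : v u j ≠ v u' j := by
        simp only [hv]
        rw [dif_pos j.2, dif_pos j.2]
        intro h
        apply hj
        apply Fin.ext
        simpa using h
      have m1 := (hJ (v u j) (hv1 u j).1 (hv1 u j).2).1 (hy j)
      have m2 := (hJ (v u' j) (hv1 u' j).1 (hv1 u' j).2).1 (hy' j)
      have b1 := (hv1 u j).2
      have b2 := (hv1 u' j).2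
      rcases lt_or_gt_of_ne hvne with h | h
      · exact IS_disj (by omega) (by omega) m1 m2
      · exact IS_disj (by omega) (by omega) m2 m1
  refine hUcard.trans (Finset.card_le_card ?_)
  intro y hy
  rw [hU, Finset.mem_biUnion] at hy
  obtain ⟨u, -, hy⟩ := hy
  rw [Fintype.mem_piFinset] at hy
  rw [Finset.mem_filter]
  refine ⟨Finset.mem_univ _, ?_⟩
  rw [Finset.abs_prod]
  have e : c ^ (b' + 1) * 4 ^ (2 * (b' + 1) * K) = ∏ i, (c * 4 ^ (v u i)) := by
    rw [Finset.prod_mul_distrib, Finset.prod_pow_eq_pow_sum, hvsum, Finset.prod_const,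
      Finset.card_univ, hb]
  rw [e]
  apply Finset.prod_le_prod
  · intro i _; positivity
  · intro i _
    exact (hJ (v u i) (hv1 u i).1 (hv1 u i).2).2.2 _ (hy i)

/-- Multivariate Walsh function. -/
def chi {d : ℕ} (J : Fin d → ℕ) (x : Fin d → ℝ) : ℝ := ∏ i, walsh (J i) (x i)

/-- Diagonal mixed mean. -/
def Tm {d : ℕ} (B : Finset (Fin d)) (n : ℕ) (f : (Fin d → ℝ) → ℝ) (x : Fin d → ℝ) : ℝ :=
  mixedLogMean B f (fun _ => n) x

lemma measurable_chi {d : ℕ} (J : Fin d → ℕ) : Measurable (chi J) := by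
  unfold chi
  exact Finset.measurable_prod _ (fun i _ => (measurable_walsh _).comp (measurable_pi_apply i))

lemma abs_chi {d : ℕ} (J : Fin d → ℕ) (x : Fin d → ℝ) : |chi J x| = 1 := by
  unfold chi
  rw [Finset.abs_prod]
  exact Finset.prod_eq_one (fun i _ => walsh_abs _ _)

lemma integrable_mul_chi {d : ℕ} {f : (Fin d → ℝ) → ℝ} (hf : Integrable f (cubeMeasure d))
    (J : Fin d → ℕ) : Integrable (fun x => f x * chi J x) (cubeMeasure d) := by
  refine hf.mul_bdd (c := 1) (measurable_chi J).aestronglyMeasurable ?_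
  exact Eventually.of_forall (fun x => by rw [Real.norm_eq_abs, abs_chi])

lemma integrable_chi {d : ℕ} (J : Fin d → ℕ) : Integrable (chi J) (cubeMeasure d) := by
  have := integrable_mul_chi (f := fun _ : Fin d → ℝ => (1:ℝ)) (integrable_const _) J
  simpa using this

lemma walshCoef_eq {d : ℕ} (f : (Fin d → ℝ) → ℝ) (j : Fin d → ℕ) :
    walshCoef f j = ∫ x, f x * chi j x ∂(cubeMeasure d) := rfl

lemma walshCoef_chi {d : ℕ} (J j : Fin d → ℕ) :
    walshCoef (chi J) j = ∏ i, if J i = j i then (1:ℝ) else 0 := by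
  rw [walshCoef_eq, cubeMeasure_eq]
  have : (fun x : Fin d → ℝ => chi J x * chi j x) =
      fun x => ∏ i, (walsh (J i) (x i) * walsh (j i) (x i)) := by
    funext x; unfold chi; rw [Finset.prod_mul_distrib]
  rw [this, integral_fintype_prod_eq_prod (fun i => fun y : ℝ => walsh (J i) y * walsh (j i) y)]
  exact Finset.prod_congr rfl (fun i _ => integral_walsh_mul _ _)

lemma rectPartialSum_chi {d : ℕ} (J N : Fin d → ℕ) (x : Fin d → ℝ) :
    rectPartialSum (chi J) N x = ∏ i, if J i < N i then walsh (J i) (x i) else 0 := by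
  unfold rectPartialSum
  simp only [walshCoef_chi, ← Finset.prod_mul_distrib]
  rw [← Finset.prod_univ_sum (fun i => Finset.range (N i))
    (fun i k => (if J i = k then (1:ℝ) else 0) * walsh k (x i))]
  refine Finset.prod_congr rfl (fun i _ => ?_)
  simp [ite_mul]

/-- one-dimensional multiplier -/
def mult {d : ℕ} (B : Finset (Fin d)) (n : ℕ) (J : Fin d → ℕ) : ℝ :=
  ∏ i, (logSum n)⁻¹ * ∑ k ∈ Finset.Ico 1 n,
    (if J i < (if i ∈ B then n - k else k) then (1:ℝ) else 0) / k

lemma Tm_chi {d : ℕ} (B : Finset (Fin d)) (n : ℕ) (J : Fin d → ℕ) (x : Fin d → ℝ) :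
    Tm B n (chi J) x = mult B n J * chi J x := by
  unfold Tm mixedLogMean mult
  simp only [rectPartialSum_chi, ← Finset.prod_div_distrib]
  rw [← Finset.prod_univ_sum (fun _ => Finset.Ico 1 n)
    (fun i k => (if J i < (if i ∈ B then n - k else k) then walsh (J i) (x i) else 0) / (k:ℝ)),
    ← Finset.prod_inv_distrib, ← Finset.prod_mul_distrib, chi, ← Finset.prod_mul_distrib]
  refine Finset.prod_congr rfl (fun i _ => ?_)
  rw [mul_assoc, Finset.sum_mul]
  congr 1
  refine Finset.sum_congr rfl (fun k _ => ?_)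
  split_ifs <;> ring

lemma logSum_eq_sum (n : ℕ) : logSum n = ∑ k ∈ Finset.Ico 1 n, (1:ℝ) / k := by
  unfold logSum
  refine Finset.sum_congr ?_ (fun _ _ => rfl)
  ext k; simp only [Finset.mem_Icc, Finset.mem_Ico]; omega

lemma logSum_pos {n : ℕ} (hn : 2 ≤ n) : 0 < logSum n := by
  have h2 : logSum 2 ≤ logSum n := logSum_mono hn
  have : logSum 2 = 1 := by simp [logSum]
  linarith

lemma mult_eq {d : ℕ} (B : Finset (Fin d)) {n : ℕ} (hn : 2 ≤ n) (J : Fin d → ℕ)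
    (hJ : ∀ i, i ∉ B → J i = 0) : mult B n J = ∏ i ∈ B, logSum (n - J i) / logSum n := by
  unfold mult
  rw [← Finset.prod_subset (Finset.subset_univ B)]
  · refine Finset.prod_congr rfl (fun i hi => ?_)
    rw [div_eq_inv_mul]
    congr 1
    rw [logSum_eq_sum]
    simp only [if_pos hi]
    rw [← Finset.sum_subset (s₁ := Finset.Ico 1 (n - J i))]
    · refine Finset.sum_congr rfl (fun k hk => ?_)
      rw [Finset.mem_Ico] at hk
      rw [if_pos (by omega)]
    · intro k; simp only [Finset.mem_Ico]; omega
    · intro k hk hk'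
      simp only [Finset.mem_Ico] at hk hk'
      rw [if_neg (by omega)]; simp
  · intro i _ hi
    have : ∑ k ∈ Finset.Ico 1 n, (if J i < (if i ∈ B then n - k else k) then (1:ℝ) else 0) / k
        = logSum n := by
      rw [logSum_eq_sum]
      refine Finset.sum_congr rfl (fun k hk => ?_)
      rw [Finset.mem_Ico] at hk
      rw [if_neg hi, hJ i hi, if_pos (by omega)]
    rw [this]
    exact inv_mul_cancel₀ (logSum_pos hn).ne'

lemma Tm_eq {d : ℕ} (B : Finset (Fin d)) (n : ℕ) (f : (Fin d → ℝ) → ℝ) (x : Fin d → ℝ) :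
    Tm B n f x = (∏ _j : Fin d, logSum n)⁻¹ *
    ∑ i ∈ Fintype.piFinset (fun _ : Fin d => Finset.Ico 1 n),
      (∑ j ∈ Fintype.piFinset (fun k => Finset.range (if k ∈ B then n - i k else i k)),
        walshCoef f j * chi j x) / ∏ j, (i j : ℝ) := rfl

lemma Tm_add {d : ℕ} (B : Finset (Fin d)) (n : ℕ) {f g : (Fin d → ℝ) → ℝ}
    (hf : Integrable f (cubeMeasure d)) (hg : Integrable g (cubeMeasure d)) (x : Fin d → ℝ) :
    Tm B n (fun y => f y + g y) x = Tm B n f x + Tm B n g x := by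
  have h : ∀ j, walshCoef (fun y => f y + g y) j = walshCoef f j + walshCoef g j := by
    intro j
    simp only [walshCoef_eq, add_mul]
    exact integral_add (integrable_mul_chi hf j) (integrable_mul_chi hg j)
  simp only [Tm_eq, h, add_mul, Finset.sum_add_distrib, add_div, mul_add]

lemma Tm_smul {d : ℕ} (B : Finset (Fin d)) (n : ℕ) (c : ℝ) (f : (Fin d → ℝ) → ℝ)
    (x : Fin d → ℝ) :
    Tm B n (fun y => c * f y) x = c * Tm B n f x := by
  have h : ∀ j, walshCoef (fun y => c * f y) j = c * walshCoef f j := by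
    intro j
    simp only [walshCoef_eq, mul_assoc]
    exact integral_const_mul _ _
  simp only [Tm_eq, h, mul_assoc, ← Finset.mul_sum, mul_div_assoc]
  ring

lemma Tm_sum {d : ℕ} (B : Finset (Fin d)) (n : ℕ) {ι : Type*} (s : Finset ι)
    (f : ι → (Fin d → ℝ) → ℝ) (hf : ∀ i ∈ s, Integrable (f i) (cubeMeasure d))
    (x : Fin d → ℝ) :
    Tm B n (fun y => ∑ i ∈ s, f i y) x = ∑ i ∈ s, Tm B n (f i) x := by
  classical
  induction s using Finset.induction_on with
  | empty =>
    have := Tm_smul B n 0 (fun _ => 0) x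
    simpa using this
  | insert a s ha ih =>
    simp only [Finset.sum_insert ha]
    rw [Tm_add B n (hf a (Finset.mem_insert_self _ _))
      (integrable_finsetSum _ (fun i hi => hf i (Finset.mem_insert_of_mem hi))), ih]
    exact fun i hi => hf i (Finset.mem_insert_of_mem hi)

lemma Tm_bound {d : ℕ} (B : Finset (Fin d)) (n : ℕ) : ∃ C : ℝ, 0 < C ∧
    ∀ f : (Fin d → ℝ) → ℝ, Integrable f (cubeMeasure d) → ∀ x,
      |Tm B n f x| ≤ C * ∫ y, |f y| ∂(cubeMeasure d) := by
  set C0 : ℝ := |(∏ _j : Fin d, logSum n)⁻¹| *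
    ∑ i ∈ Fintype.piFinset (fun _ : Fin d => Finset.Ico 1 n),
      (∑ j ∈ Fintype.piFinset (fun k => Finset.range (if k ∈ B then n - i k else i k)),
        (1:ℝ)) / |∏ j, (i j : ℝ)| with hC0
  have hC0' : 0 ≤ C0 := mul_nonneg (abs_nonneg _) (Finset.sum_nonneg fun i _ =>
    div_nonneg (Finset.sum_nonneg fun _ _ => zero_le_one) (abs_nonneg _))
  refine ⟨C0 + 1, by linarith, fun f hf x => ?_⟩
  set I := ∫ y, |f y| ∂(cubeMeasure d) with hI
  have hI0 : 0 ≤ I := integral_nonneg (fun y => abs_nonneg _)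
  have hw : ∀ j, |walshCoef f j| ≤ I := by
    intro j
    rw [walshCoef_eq, hI]
    refine (abs_integral_le_integral_abs).trans (le_of_eq ?_)
    congr 1; funext y; rw [abs_mul, abs_chi, mul_one]
  have : |Tm B n f x| ≤ C0 * I := by
    rw [Tm_eq, abs_mul, hC0, mul_assoc]
    refine mul_le_mul_of_nonneg_left ?_ (abs_nonneg _)
    refine (Finset.abs_sum_le_sum_abs _ _).trans ?_
    rw [Finset.sum_mul]
    refine Finset.sum_le_sum (fun i _ => ?_)
    rw [abs_div, div_mul_eq_mul_div]
    refine div_le_div_of_nonneg_right ?_ (abs_nonneg _)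
    refine (Finset.abs_sum_le_sum_abs _ _).trans ?_
    rw [Finset.sum_mul]
    refine Finset.sum_le_sum (fun j _ => ?_)
    rw [abs_mul, abs_chi, mul_one, one_mul]
    exact hw j
  linarith

/-- Bounded test functions for which the means converge uniformly. -/
structure Good {d : ℕ} (B : Finset (Fin d)) (g : (Fin d → ℝ) → ℝ) : Prop where
  meas : Measurable g
  int : Integrable g (cubeMeasure d)
  conv : ∀ ε > 0, ∀ᶠ n in atTop, ∀ x, |Tm B n g x - g x| ≤ ε

lemma Good.smul {d : ℕ} {B : Finset (Fin d)} {g : (Fin d → ℝ) → ℝ} (hg : Good B g) (c : ℝ) :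
    Good B (fun x => c * g x) := by
  refine ⟨hg.meas.const_mul c, hg.int.const_mul c, fun ε hε => ?_⟩
  filter_upwards [hg.conv (ε / (|c| + 1)) (by positivity)] with n hn x
  rw [Tm_smul, ← mul_sub, abs_mul]
  have := hn x
  rw [le_div_iff₀ (by positivity)] at this
  nlinarith [abs_nonneg (Tm B n g x - g x)]

lemma Good.add {d : ℕ} {B : Finset (Fin d)} {f g : (Fin d → ℝ) → ℝ} (hf : Good B f)
    (hg : Good B g) : Good B (fun x => f x + g x) := by
  refine ⟨hf.meas.add hg.meas, hf.int.add hg.int, fun ε hε => ?_⟩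
  filter_upwards [hf.conv (ε / 2) (by positivity), hg.conv (ε / 2) (by positivity)] with n h1 h2 x
  rw [Tm_add B n hf.int hg.int]
  have a := abs_le.1 (h1 x)
  have b := abs_le.1 (h2 x)
  rw [abs_le]; constructor <;> linarith

lemma Good.zero {d : ℕ} (B : Finset (Fin d)) : Good B (fun _ => 0) := by
  refine ⟨measurable_const, integrable_const _, fun ε hε => Eventually.of_forall fun n x => ?_⟩
  have := Tm_smul B n 0 (fun _ => 0) x
  simp only [zero_mul] at this
  rw [this]; simpa using hε.le

lemma Good.sum {d : ℕ} {B : Finset (Fin d)} {ι : Type*} (s : Finset ι)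
    (f : ι → (Fin d → ℝ) → ℝ) (hf : ∀ i ∈ s, Good B (f i)) :
    Good B (fun x => ∑ i ∈ s, f i x) := by
  classical
  induction s using Finset.induction_on with
  | empty => simpa using Good.zero B
  | insert a s ha ih =>
    simp only [Finset.sum_insert ha]
    exact (hf a (Finset.mem_insert_self _ _)).add
      (ih (fun i hi => hf i (Finset.mem_insert_of_mem hi)))

lemma tendsto_logSum : Tendsto logSum atTop atTop := by
  rw [← tendsto_add_atTop_iff_nat 1]
  refine tendsto_atTop_mono log_le_logSum ?_
  exact Real.tendsto_log_atTop.comp (tendsto_natCast_atTop_atTop.comp (tendsto_add_atTop_nat 1))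

lemma tendsto_ratio (J : ℕ) : Tendsto (fun n => logSum (n - J) / logSum n) atTop (nhds 1) := by
  have h1 : Tendsto (fun n => 1 - (J:ℝ) / logSum n) atTop (nhds 1) := by
    have := (tendsto_logSum.const_div_atTop (J:ℝ)).const_sub 1
    simpa using this
  refine tendsto_of_tendsto_of_tendsto_of_le_of_le' h1 tendsto_const_nhds ?_ ?_
  · filter_upwards [eventually_ge_atTop (J + 2)] with n hn
    have hp := logSum_pos (n := n) (by omega)
    rw [le_div_iff₀ hp, sub_mul, div_mul_cancel₀ _ hp.ne', one_mul]
    have := logSum_sub_le (K := n - J) (by omega) J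
    rw [Nat.sub_add_cancel (by omega)] at this
    have h2 : (J:ℝ) / ((n - J : ℕ) : ℝ) ≤ J := by
      apply div_le_self (Nat.cast_nonneg _)
      exact_mod_cast (by omega : 1 ≤ n - J)
    linarith
  · filter_upwards [eventually_ge_atTop 2] with n hn
    have hp := logSum_pos hn
    rw [div_le_one hp]
    exact logSum_mono (Nat.sub_le _ _)

lemma Good.chi {d : ℕ} {B : Finset (Fin d)} {J : Fin d → ℕ} (hJ : ∀ i, i ∉ B → J i = 0) :
    Good B (chi J) := by
  refine ⟨measurable_chi J, integrable_chi J, fun ε hε => ?_⟩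
  have h1 : Tendsto (fun n => ∏ i ∈ B, logSum (n - J i) / logSum n) atTop (nhds 1) := by
    have := tendsto_finsetProd B (fun i _ => tendsto_ratio (J i))
    simpa using this
  have h2 := h1.eventually (Metric.closedBall_mem_nhds 1 hε)
  filter_upwards [h2, eventually_ge_atTop 2] with n hn h2n x
  rw [Tm_chi, mult_eq B h2n J hJ]
  rw [Real.dist_eq] at hn
  rw [show ∀ a b : ℝ, a * b - b = (a - 1) * b by intros; ring, abs_mul, abs_chi, mul_one]
  exact hn

/-- Extension of a multi-index on `B` by zero. -/
def extB {d : ℕ} {B : Finset (Fin d)} (J : ↥B → ℕ) : Fin d → ℕ :=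
  fun i => if h : i ∈ B then J ⟨i, h⟩ else 0

/-- Normalised indicator of a dyadic cell (in the `B` variables). -/
def PT {d : ℕ} {B : Finset (Fin d)} {N : ℕ} (t : ↥B → Gam N) (x : Fin d → ℝ) : ℝ :=
  if cellB B N x = t then (2 ^ N) ^ B.card else 0

lemma extB_off {d : ℕ} {B : Finset (Fin d)} (J : ↥B → ℕ) : ∀ i, i ∉ B → extB J i = 0 :=
  fun _ hi => dif_neg hi

lemma extB_coe {d : ℕ} {B : Finset (Fin d)} (J : ↥B → ℕ) (i : ↥B) : extB J i = J i := by
  unfold extB; rw [dif_pos i.2]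

lemma chi_extB {d : ℕ} {B : Finset (Fin d)} (J : ↥B → ℕ) (x : Fin d → ℝ) :
    chi (extB J) x = ∏ i : ↥B, walsh (J i) (x i) := by
  unfold chi
  rw [← Finset.prod_subset (Finset.subset_univ B), ← Finset.prod_coe_sort]
  · refine Finset.prod_congr rfl (fun i _ => ?_)
    rw [extB_coe]
  · intro i _ hi
    rw [extB_off J i hi, walsh_zero]

lemma PT_eq {d : ℕ} {B : Finset (Fin d)} {N : ℕ} (t : ↥B → Gam N) :
    PT t = fun x => ∑ J ∈ Fintype.piFinset (fun _ : ↥B => Finset.range (2 ^ N)),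
      (∏ i, WW (J i) (ex (t i))) * chi (extB J) x := by
  funext x
  simp only [chi_extB, ← Finset.prod_mul_distrib]
  rw [← Finset.prod_univ_sum (fun _ : ↥B => Finset.range (2 ^ N))
    (fun i j => WW j (ex (t i)) * walsh j (x i))]
  simp only [dirichlet_cell]
  unfold PT
  split_ifs with h
  · rw [Finset.prod_congr rfl (g := fun _ => (2:ℝ) ^ N)]
    · simp
    · intro i _
      rw [if_pos]
      exact congrFun h i
  · obtain ⟨i, hi⟩ := Function.ne_iff.1 h
    exact (Finset.prod_eq_zero (Finset.mem_univ i) (if_neg hi)).symm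

lemma Good.PT {d : ℕ} {B : Finset (Fin d)} {N : ℕ} (t : ↥B → Gam N) : Good B (PT t) := by
  rw [PT_eq]
  exact Good.sum _ _ (fun J _ => (Good.chi (extB_off J)).smul _)

lemma Tm_PT {d : ℕ} {B : Finset (Fin d)} {N n : ℕ} (h2 : 2 ≤ n) (hn : n ≤ 2 ^ N)
    (t : ↥B → Gam N) (x : Fin d → ℝ) :
    Tm B n (PT t) x = ∏ i, kern n (cellB B N x i * t i) := by
  rw [PT_eq, Tm_sum _ _ _ _ (fun J _ => (integrable_chi _).const_mul _)]
  have : ∀ J : ↥B → ℕ, Tm B n (fun y => (∏ i, WW (J i) (ex (t i))) * chi (extB J) y) x =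
      ∏ i, WW (J i) (ex (t i)) * (logSum (n - J i) / logSum n * walsh (J i) (x i)) := by
    intro J
    rw [Tm_smul, Tm_chi, mult_eq B h2 _ (extB_off J), chi_extB,
      ← Finset.prod_coe_sort B (fun i => logSum (n - extB J i) / logSum n),
      ← Finset.prod_mul_distrib, ← Finset.prod_mul_distrib]
    simp only [extB_coe]
  simp only [this]
  rw [← Finset.prod_univ_sum (fun _ : ↥B => Finset.range (2 ^ N))
    (fun i j => WW j (ex (t i)) * (logSum (n - j) / logSum n * walsh j (x i)))]
  refine Finset.prod_congr rfl (fun i _ => ?_)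
  unfold kern HH
  rw [Finset.sum_div, ← Finset.sum_subset (Finset.range_mono hn)]
  · refine Finset.sum_congr rfl (fun j hj => ?_)
    rw [Finset.mem_range] at hj
    rw [ex_mul, WW_mul, walsh_cell (lt_of_lt_of_le hj hn)]
    unfold cellB
    ring
  · intro j _ hj
    rw [Finset.mem_range] at hj
    rw [Nat.sub_eq_zero_of_le (by omega), logSum_zero]; simp

open Classical in
lemma block_K {d : ℕ} (B : Finset (Fin d)) {b : ℕ} (hb : B.card = b) (hb2 : 2 ≤ b) {K : ℕ}
    (hK : 9 ≤ K) {C c : ℝ} (hC : 0 < C) (hc : c = 1 / (8 * ((b:ℝ) + 3))) :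
    ∃ f : (Fin d → ℝ) → ℝ, Good B f ∧
      (∀ x, f x = 0 ∨ |f x| = C / c ^ b * 4 ^ (b * ((b - 1) * K + 1))) ∧
      C / c ^ b * 4 ^ (b * ((b - 1) * K + 1)) * (cubeMeasure d).real {x | f x ≠ 0} ≤
        C * (2 * 4 ^ b / c ^ b) / K ^ (b - 1) ∧
      1 / 4 ≤ (cubeMeasure d).real {x | C ≤ |Tm B (pIdx ((b + 1) * K)) f x|} := by
  have hc0 : 0 < c := by rw [hc]; positivity
  set A := (b + 1) * K with hA
  set N := 2 * A + 2 with hN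
  set lam : ℝ := c ^ b * 4 ^ (2 * b * K) with hlam
  have hlam0 : 0 < lam := by positivity
  set n := pIdx A with hn
  set M := 4 ^ (b * (2 * K + 1)) / K ^ (b - 1) + 1 with hM
  set h : (↥B → Gam N) → ℝ := fun y => ∏ i, kern n (y i) with hh
  clear_value M n
  have hKpos : 0 < K ^ (b - 1) := by positivity
  have hqe : (2 ^ N) ^ b = 4 ^ (b * (A + 1)) := by
    rw [hN, show 2 * A + 2 = 2 * (A + 1) by ring, pow_mul 2, ← pow_mul, mul_comm]
    norm_num
  have hqeR : ((2:ℝ) ^ N) ^ b = 4 ^ (b * (A + 1)) := by exact_mod_cast hqe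
  have hcardG : Fintype.card (↥B → Gam N) = 4 ^ (b * (A + 1)) := by
    rw [Fintype.card_fun, ← hqe, Fintype.card_coe, hb]
    congr 1
    unfold Gam
    rw [Fintype.card_fun]; simp
  have hbA : 2 * b * K ≤ b * A := by
    rw [hA]
    calc 2 * b * K = b * (2 * K) := by ring
      _ ≤ _ := Nat.mul_le_mul_left _ (Nat.mul_le_mul_right _ (by omega))
  have hMle : Fintype.card (↥B → Gam N) ≤
      M * (Finset.univ.filter (fun y => lam ≤ |h y|)).card := by
    have hbs : K ^ (b - 1) * 4 ^ (b * A - 2 * b * K) ≤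
        (Finset.univ.filter (fun y => lam ≤ |h y|)).card := by
      have := big_set (ι := ↥B) b K (by rw [Fintype.card_coe, hb]) (by omega) hK
      rw [← hc, ← hA, ← hN, ← hlam, ← hn] at this
      convert this
    refine le_trans ?_ (Nat.mul_le_mul (le_refl M) hbs)
    rw [hcardG, ← mul_assoc]
    have e1 : 4 ^ (b * (2 * K + 1)) ≤ M * K ^ (b - 1) := by
      rw [hM, add_mul, one_mul]
      exact (Nat.lt_div_mul_add hKpos).le
    calc 4 ^ (b * (A + 1)) = 4 ^ (b * (2 * K + 1)) * 4 ^ (b * A - 2 * b * K) := by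
          rw [← pow_add]; congr 1
          have : b * (2 * K + 1) = 2 * b * K + b := by ring
          rw [this, mul_add]; omega
      _ ≤ _ := Nat.mul_le_mul_right _ e1
  obtain ⟨T, ε, hT, hS⟩ := signed_cover h lam M hMle
  set q : ℝ := (2 ^ N) ^ b with hq
  have hq0 : 0 < q := by positivity
  have hamp : C / c ^ b * 4 ^ (b * ((b - 1) * K + 1)) = C / lam * q := by
    rw [hqeR, hlam]
    have : b * (A + 1) = b * ((b - 1) * K + 1) + 2 * b * K := by
      obtain ⟨b', rfl⟩ : ∃ b', b = b' + 1 := ⟨b - 1, by omega⟩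
      simp only [Nat.add_sub_cancel]; rw [hA]; ring
    rw [this, pow_add]
    field_simp
  set f : (Fin d → ℝ) → ℝ := fun x => C / lam * ∑ t ∈ T, ((ε t : ℤ) : ℝ) * PT t x with hf
  have hfx : ∀ x, f x = C / lam * (if cellB B N x ∈ T then
      ((ε (cellB B N x) : ℤ) : ℝ) * q else 0) := by
    intro x
    simp only [hf, PT, hb, ← hq, mul_ite, mul_zero, Finset.sum_ite_eq]
  have hsupp : {x | f x ≠ 0} ⊆ {x | cellB B N x ∈ T} := by
    intro x hx
    by_contra hcon
    apply hx
    change cellB B N x ∉ T at hcon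
    rw [hfx, if_neg hcon, mul_zero]
  have hmsupp : (cubeMeasure d).real {x | f x ≠ 0} ≤ M / q := by
    refine (measureReal_mono hsupp).trans ?_
    rw [measure_cellB_mem, hb, ← hq, ← div_eq_mul_inv]
    exact div_le_div_of_nonneg_right (by exact_mod_cast hT) hq0.le
  have hTf : ∀ x, Tm B n f x =
      C / lam * ∑ t ∈ T, ((ε t : ℤ) : ℝ) * h (cellB B N x * t) := by
    intro x
    have h2n : 2 ≤ n := by
      have h1 : 4 ^ 1 ≤ 4 ^ A := Nat.pow_le_pow_right (by norm_num) (by rw [hA]; nlinarith)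
      have := pIdx_ge A
      omega
    have hnN : n ≤ 2 ^ N := by
      rw [hN, show 2 * A + 2 = 2 * (A + 1) by ring, pow_mul, hn]
      exact (pIdx_lt A).le
    rw [hf, Tm_smul, Tm_sum _ _ _ _ (fun t _ => (Good.PT t).int.const_mul _)]
    congr 1
    refine Finset.sum_congr rfl (fun t _ => ?_)
    rw [Tm_smul, Tm_PT h2n hnN]
    rfl
  refine ⟨f, (Good.sum _ _ (fun t _ => (Good.PT t).smul _)).smul _, ?_, ?_, ?_⟩
  · intro x
    rw [hamp, hfx]
    split_ifs with hx
    · right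
      rw [abs_mul, abs_mul, abs_of_pos (div_pos hC hlam0), abs_of_pos hq0]
      rcases Int.units_eq_one_or (ε (cellB B N x)) with h1 | h1 <;> simp [h1]
    · left; rw [mul_zero]
  · rw [hamp]
    refine (mul_le_mul_of_nonneg_left hmsupp (by positivity)).trans ?_
    rw [show C / lam * q * (M / q) = C / lam * M by field_simp]
    have hMR : (M:ℝ) ≤ 2 * 4 ^ (b * (2 * K + 1)) / K ^ (b - 1) := by
      have h1 : ((4 ^ (b * (2 * K + 1)) / K ^ (b - 1) : ℕ) : ℝ) ≤
          4 ^ (b * (2 * K + 1)) / K ^ (b - 1) := by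
        refine Nat.cast_div_le.trans (le_of_eq ?_)
        push_cast; rfl
      have h2 : (1:ℝ) ≤ 4 ^ (b * (2 * K + 1)) / K ^ (b - 1) := by
        rw [one_le_div (by exact_mod_cast hKpos)]
        have : K ^ (b - 1) ≤ 4 ^ (b * (2 * K + 1)) := by
          calc K ^ (b - 1) ≤ (4 ^ K) ^ (b - 1) :=
                Nat.pow_le_pow_left (Nat.lt_pow_self (by norm_num)).le _
            _ = 4 ^ (K * (b - 1)) := by rw [← pow_mul]
            _ ≤ _ := Nat.pow_le_pow_right (by norm_num) (by
              rw [mul_comm]; exact Nat.mul_le_mul (by omega) (by omega))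
        exact_mod_cast this
      rw [hM]; push_cast
      rw [mul_div_assoc]
      push_cast at h1
      linarith
    refine (mul_le_mul_of_nonneg_left hMR (by positivity)).trans (le_of_eq ?_)
    rw [hlam, show b * (2 * K + 1) = 2 * b * K + b by ring, pow_add]
    have : (0:ℝ) < (K:ℝ) ^ (b - 1) := by exact_mod_cast hKpos
    field_simp
  · set S := (Finset.univ.filter (fun y : ↥B → Gam N =>
      lam ≤ |∑ t ∈ T, ((ε t : ℤ) : ℝ) * h (y * t)|)) with hSdef
    have hsub : {x | cellB B N x ∈ S} ⊆ {x | C ≤ |Tm B n f x|} := by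
      intro x hx
      rw [Set.mem_ofPred_eq, hSdef, Finset.mem_filter] at hx
      rw [Set.mem_ofPred_eq, hTf, abs_mul, abs_of_pos (div_pos hC hlam0)]
      calc C = C / lam * lam := by field_simp
        _ ≤ _ := mul_le_mul_of_nonneg_left hx.2 (by positivity)
    refine le_trans ?_ (measureReal_mono hsub)
    rw [measure_cellB_mem, hb, ← hq, ← div_eq_mul_inv, div_le_div_iff₀ (by norm_num) hq0]
    rw [hcardG] at hS
    have : ((4 ^ (b * (A + 1)) : ℕ) : ℝ) ≤ ((4 * S.card : ℕ) : ℝ) := by exact_mod_cast hS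
    push_cast at this
    rw [hqeR]; linarith

lemma block {d : ℕ} (B : Finset (Fin d)) (hB : 1 < B.card)
    (phi : ℝ → ℝ) (hphi0 : ∀ x ≥ (0:ℝ), 0 ≤ phi x)
    (hphio : Tendsto (fun x => phi x / (x * Real.log x ^ (B.card - 1))) atTop (nhds 0))
    (C δ R : ℝ) (hC : 0 < C) (hδ : 0 < δ) (P : ℕ → Prop) (hP : ∀ᶠ n in atTop, P n) :
    ∃ (f : (Fin d → ℝ) → ℝ) (n : ℕ) (a : ℝ), Good B f ∧ P n ∧ R ≤ a ∧ 1 ≤ a ∧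
      (∀ x, f x = 0 ∨ |f x| = a) ∧
      a * (cubeMeasure d).real {x | f x ≠ 0} ≤ δ ∧
      phi (2 * a) * (cubeMeasure d).real {x | f x ≠ 0} ≤ δ ∧
      1 / 4 ≤ (cubeMeasure d).real {x | C ≤ |Tm B n f x|} := by
  set b := B.card with hb
  set c : ℝ := 1 / (8 * ((b:ℝ) + 3)) with hc
  have hc0 : 0 < c := by rw [hc]; positivity
  set a : ℕ → ℝ := fun K => C / c ^ b * 4 ^ (b * ((b - 1) * K + 1)) with ha
  set κ : ℝ := 2 * 4 ^ b / c ^ b with hκ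
  have hκ0 : 0 < κ := by positivity
  have hCc : 0 < C / c ^ b := by positivity
  have haT : Tendsto a atTop atTop := by
    have h1 : Tendsto (fun K : ℕ => C / c ^ b * (4:ℝ) ^ K) atTop atTop :=
      (tendsto_pow_atTop_atTop_of_one_lt (by norm_num)).const_mul_atTop hCc
    refine tendsto_atTop_mono (fun K => ?_) h1
    refine mul_le_mul_of_nonneg_left (pow_le_pow_right₀ (by norm_num) ?_) hCc.le
    have h1 : K ≤ (b - 1) * K := Nat.le_mul_of_pos_left _ (by omega)
    have h2 : (b - 1) * K + 1 ≤ b * ((b - 1) * K + 1) := Nat.le_mul_of_pos_left _ (by omega)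
    omega
  set D : ℝ := |Real.log (2 * (C / c ^ b))| + b * b * Real.log 4 with hD
  have hD0 : 0 ≤ D := by
    have := one_le_log_four
    positivity
  have hlog : ∀ K : ℕ, 1 ≤ K → Real.log (2 * a K) ≤ D * K := by
    intro K hK
    simp only [ha]
    rw [← mul_assoc, Real.log_mul (by positivity) (by positivity), Real.log_pow, hD, add_mul]
    have hKR : (1:ℝ) ≤ K := by exact_mod_cast hK
    have h1 : Real.log (2 * (C / c ^ b)) ≤ |Real.log (2 * (C / c ^ b))| * K :=
      (le_abs_self _).trans (le_mul_of_one_le_right (abs_nonneg _) hKR)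
    have h2 : b * ((b - 1) * K + 1) ≤ b * b * K := by
      obtain ⟨b', hb'⟩ : ∃ b', b = b' + 1 := ⟨b - 1, by omega⟩
      rw [hb', mul_assoc]
      refine Nat.mul_le_mul_left _ ?_
      simp only [Nat.add_sub_cancel]; nlinarith
    have h3 : ((b * ((b - 1) * K + 1) : ℕ) : ℝ) ≤ ((b * b * K : ℕ) : ℝ) := by exact_mod_cast h2
    have h4 := mul_le_mul_of_nonneg_right h3 (zero_le_one.trans one_le_log_four)
    rw [Nat.cast_mul (b * b), Nat.cast_mul b b] at h4
    nlinarith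
  have h2aT : Tendsto (fun K => 2 * a K) atTop atTop := haT.const_mul_atTop (by norm_num)
  set η : ℝ := δ / (2 * (D ^ (b - 1) * (C * κ)) + 1) with hη
  have hη0 : 0 < η := by positivity
  have e1 : ∀ᶠ K in atTop, phi (2 * a K) / ((2 * a K) * Real.log (2 * a K) ^ (b - 1)) ≤ η :=
    (hphio.comp h2aT).eventually (eventually_le_nhds hη0)
  have e2 : ∀ᶠ K : ℕ in atTop, C * κ / (K:ℝ) ^ (b - 1) ≤ δ := by
    have h1 : Tendsto (fun K : ℕ => (K:ℝ) ^ (b - 1)) atTop atTop :=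
      (tendsto_pow_atTop (by omega)).comp tendsto_natCast_atTop_atTop
    exact (h1.const_div_atTop (C * κ)).eventually (eventually_le_nhds hδ)
  have hnT : Tendsto (fun K => pIdx ((b + 1) * K)) atTop atTop := by
    refine tendsto_atTop_mono (fun K => ?_) tendsto_id
    have h1 := pIdx_ge ((b + 1) * K)
    have h2 : (b + 1) * K < 4 ^ ((b + 1) * K) := Nat.lt_pow_self (by norm_num)
    have h3 : K ≤ (b + 1) * K := Nat.le_mul_of_pos_left _ (by omega)
    simp only [id]; omega
  obtain ⟨K, h1, h2, h3, h4, h5, h6, h7⟩ := (e1.and (e2.and ((hnT.eventually hP).and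
    ((haT.eventually_ge_atTop R).and ((haT.eventually_ge_atTop 1).and
    ((eventually_ge_atTop 9).and (h2aT.eventually_gt_atTop 1))))))).exists
  obtain ⟨f, hf1, hf2, hf3, hf4⟩ := block_K B hb.symm (by omega) h6 hC hc
  refine ⟨f, _, a K, hf1, h3, h4, h5, hf2, hf3.trans h2, ?_, hf4⟩
  change a K * _ ≤ C * κ / _ at hf3
  set m := (cubeMeasure d).real {x | f x ≠ 0}
  have hm0 : 0 ≤ m := measureReal_nonneg
  have hl0 : 0 < Real.log (2 * a K) := Real.log_pos h7
  have hKpos : (0:ℝ) < (K:ℝ) ^ (b - 1) := by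
    have : 0 < K := by omega
    positivity
  have haK : 0 < a K := by linarith
  rw [div_le_iff₀ (by positivity)] at h1
  have hlp : Real.log (2 * a K) ^ (b - 1) ≤ D ^ (b - 1) * K ^ (b - 1) := by
    rw [← mul_pow]
    exact pow_le_pow_left₀ hl0.le (hlog K (by omega)) _
  rw [le_div_iff₀ hKpos] at hf3
  calc phi (2 * a K) * m ≤ η * (2 * a K * Real.log (2 * a K) ^ (b - 1)) * m :=
        mul_le_mul_of_nonneg_right h1 hm0
    _ ≤ η * (2 * a K * (D ^ (b - 1) * K ^ (b - 1))) * m := by gcongr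
    _ = η * (2 * D ^ (b - 1) * (a K * m * K ^ (b - 1))) := by ring
    _ ≤ η * (2 * D ^ (b - 1) * (C * κ)) := by gcongr
    _ ≤ η * (2 * (D ^ (b - 1) * (C * κ)) + 1) := by
        refine mul_le_mul_of_nonneg_left ?_ hη0.le
        linarith
    _ = δ := by rw [hη]; field_simp

lemma tsum_L1 {α : Type*} [MeasurableSpace α] {μ : Measure α} (f : ℕ → α → ℝ) (δ : ℕ → ℝ)
    (hm : ∀ k, Measurable (f k)) (hi : ∀ k, Integrable (f k) μ)
    (hδ : ∀ k, ∫ x, |f k x| ∂μ ≤ δ k) (hs : Summable δ) :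
    Integrable (fun x => ∑' k, f k x) μ ∧ ∫ x, |∑' k, f k x| ∂μ ≤ ∑' k, δ k := by
  have hδ0 : ∀ k, 0 ≤ δ k := fun k => (integral_nonneg (fun x => abs_nonneg _)).trans (hδ k)
  have hmeas : Measurable (fun x => ∑' k, f k x) := Measurable.tsum hm
  have key : ∫⁻ x, ‖∑' k, f k x‖ₑ ∂μ ≤ ENNReal.ofReal (∑' k, δ k) := by
    calc ∫⁻ x, ‖∑' k, f k x‖ₑ ∂μ ≤ ∫⁻ x, ∑' k, ‖f k x‖ₑ ∂μ :=
          lintegral_mono (fun x => enorm_tsum_le_tsum_enorm)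
      _ = ∑' k, ∫⁻ x, ‖f k x‖ₑ ∂μ := lintegral_tsum (fun k => (hm k).enorm.aemeasurable)
      _ ≤ ∑' k, ENNReal.ofReal (δ k) := by
          refine ENNReal.tsum_le_tsum (fun k => ?_)
          rw [← ofReal_integral_norm_eq_lintegral_enorm (hi k)]
          exact ENNReal.ofReal_le_ofReal (hδ k)
      _ = _ := (ENNReal.ofReal_tsum_of_nonneg hδ0 hs).symm
  have hFint : Integrable (fun x => ∑' k, f k x) μ :=
    ⟨hmeas.aestronglyMeasurable, key.trans_lt ENNReal.ofReal_lt_top⟩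
  refine ⟨hFint, ?_⟩
  rw [← ofReal_integral_norm_eq_lintegral_enorm hFint] at key
  exact (ENNReal.ofReal_le_ofReal_iff (tsum_nonneg hδ0)).1 key

lemma hump_seq {d : ℕ} (B : Finset (Fin d)) (hB : 1 < B.card)
    (phi : ℝ → ℝ) (hphi0 : ∀ x ≥ (0:ℝ), 0 ≤ phi x)
    (hphio : Tendsto (fun x => phi x / (x * Real.log x ^ (B.card - 1))) atTop (nhds 0))
    (Cn : ℕ → ℝ) (hCn : ∀ n, 0 < Cn n) :
    ∃ (f : ℕ → (Fin d → ℝ) → ℝ) (n : ℕ → ℕ) (a δ : ℕ → ℝ),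
      (∀ k, Good B (f k)) ∧
      (∀ k x, |Tm B (n k) (fun y => ∑ i ∈ Finset.range k, f i y) x -
        ∑ i ∈ Finset.range k, f i x| ≤ 1) ∧
      (∀ k, k ≤ n k) ∧ (∀ k, ∑ i ∈ Finset.range k, a i ≤ a k) ∧ (∀ k, 1 ≤ a k) ∧
      (∀ k x, f k x = 0 ∨ |f k x| = a k) ∧
      (∀ k, a k * (cubeMeasure d).real {x | f k x ≠ 0} ≤ δ k) ∧
      (∀ k, phi (2 * a k) * (cubeMeasure d).real {x | f k x ≠ 0} ≤ δ k) ∧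
      (∀ k : ℕ, 1 / 4 ≤ (cubeMeasure d).real {x | (k:ℝ) + 1 ≤ |Tm B (n k) (f k) x|}) ∧
      (∀ k, δ (k + 1) ≤ δ k / 2) ∧ (∀ k, Cn (n k) * (2 * δ (k + 1)) ≤ 1) ∧ δ 0 = 1 := by
  let X := {s : ((Fin d → ℝ) → ℝ) × ℝ × ℝ // Good B s.1 ∧ 0 < s.2.2}
  have hstep : ∀ (k : ℕ) (s : X), ∃ p : ((Fin d → ℝ) → ℝ) × ℕ × ℝ,
      Good B p.1 ∧ ((∀ x, |Tm B p.2.1 s.1.1 x - s.1.1 x| ≤ 1) ∧ k ≤ p.2.1) ∧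
      s.1.2.1 ≤ p.2.2 ∧ 1 ≤ p.2.2 ∧
      (∀ x, p.1 x = 0 ∨ |p.1 x| = p.2.2) ∧
      p.2.2 * (cubeMeasure d).real {x | p.1 x ≠ 0} ≤ s.1.2.2 ∧
      phi (2 * p.2.2) * (cubeMeasure d).real {x | p.1 x ≠ 0} ≤ s.1.2.2 ∧
      1 / 4 ≤ (cubeMeasure d).real {x | (k:ℝ) + 1 ≤ |Tm B p.2.1 p.1 x|} := by
    intro k s
    obtain ⟨f, n, a, h⟩ := block B hB phi hphi0 hphio ((k:ℝ) + 1) s.1.2.2 s.1.2.1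
      (by positivity) s.2.2 (fun n => (∀ x, |Tm B n s.1.1 x - s.1.1 x| ≤ 1) ∧ k ≤ n)
      ((s.2.1.conv 1 one_pos).and (eventually_ge_atTop k))
    exact ⟨(f, n, a), h⟩
  choose p hp using hstep
  let nxt : ℕ → X → X := fun k s =>
    ⟨(fun x => s.1.1 x + (p k s).1 x, s.1.2.1 + (p k s).2.2,
      min (s.1.2.2 / 2) (1 / (2 * Cn (p k s).2.1))),
      s.2.1.add (hp k s).1, lt_min (half_pos s.2.2) (by have := hCn (p k s).2.1; positivity)⟩
  let s : ℕ → X := fun k => Nat.rec ⟨(fun _ => 0, 0, 1), Good.zero B, one_pos⟩ nxt k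
  have hs : ∀ k, s (k + 1) = nxt k (s k) := fun k => rfl
  have hg : ∀ k, (s k).1.1 = fun x => ∑ i ∈ Finset.range k, (p i (s i)).1 x := by
    intro k
    induction k with
    | zero => funext x; simp [s]
    | succ k ih =>
      funext x
      rw [Finset.sum_range_succ, hs]
      simp only [nxt]
      rw [ih]
  have hR : ∀ k, (s k).1.2.1 = ∑ i ∈ Finset.range k, (p i (s i)).2.2 := by
    intro k
    induction k with
    | zero => simp [s]
    | succ k ih =>
      rw [Finset.sum_range_succ, hs]
      simp only [nxt]
      rw [ih]
  refine ⟨fun k => (p k (s k)).1, fun k => (p k (s k)).2.1, fun k => (p k (s k)).2.2,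
    fun k => (s k).1.2.2, fun k => (hp k (s k)).1, fun k x => ?_, fun k => (hp k (s k)).2.1.2,
    fun k => ?_, fun k => (hp k (s k)).2.2.2.1, fun k => (hp k (s k)).2.2.2.2.1,
    fun k => (hp k (s k)).2.2.2.2.2.1, fun k => (hp k (s k)).2.2.2.2.2.2.1,
    fun k => (hp k (s k)).2.2.2.2.2.2.2, fun k => ?_, fun k => ?_, rfl⟩
  · have := (hp k (s k)).2.1.1 x
    rw [hg k] at this
    exact this
  · have := (hp k (s k)).2.2.1
    rw [hR k] at this
    exact this
  · beta_reduce; rw [hs]; exact min_le_left _ _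
  · beta_reduce
    rw [hs]
    have h1 := hCn (p k (s k)).2.1
    have h2 : min ((s k).1.2.2 / 2) (1 / (2 * Cn (p k (s k)).2.1)) ≤
      1 / (2 * Cn (p k (s k)).2.1) := min_le_right _ _
    rw [le_div_iff₀ (by positivity)] at h2
    simp only [nxt]
    linarith

lemma exists_small_tail {α : Type*} [MeasurableSpace α] (μ : Measure α) [IsProbabilityMeasure μ]
    {g : α → ℝ} (hg : Measurable g) : ∃ R : ℕ, μ.real {x | (R:ℝ) ≤ |g x|} < 1 / 16 := by
  have h := tendsto_measure_iInter_atTop (μ := μ) (s := fun R : ℕ => {x | (R:ℝ) ≤ |g x|})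
    (fun R => (measurableSet_le measurable_const hg.abs).nullMeasurableSet)
    (fun R R' hR x hx => le_trans (by exact_mod_cast hR) (show (R':ℝ) ≤ |g x| from hx))
    ⟨0, measure_ne_top _ _⟩
  have he : (⋂ R : ℕ, {x | (R:ℝ) ≤ |g x|}) = ∅ := by
    rw [Set.eq_empty_iff_forall_notMem]
    intro x hx
    obtain ⟨R, hR⟩ := exists_nat_gt |g x|
    have : (R:ℝ) ≤ |g x| := Set.mem_iInter.1 hx R
    linarith
  rw [he, measure_empty] at h
  have h2 := (ENNReal.tendsto_toReal ENNReal.zero_ne_top).comp h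
  obtain ⟨R, hR⟩ := (h2.eventually (eventually_lt_nhds
    (show (0:ENNReal).toReal < 1 / 16 by norm_num))).exists
  exact ⟨R, hR⟩

theorem main_div (d : ℕ) (B : Finset (Fin d)) (hB : 1 < B.card)
    (phi : ℝ → ℝ) (hphi0 : ∀ x ≥ (0:ℝ), 0 ≤ phi x) (hphimono : MonotoneOn phi (Set.Ici 0))
    (hphio : Tendsto (fun x => phi x / (x * Real.log x ^ (B.card - 1))) atTop (nhds 0)) :
    ∃ f : (Fin d → ℝ) → ℝ, Measurable f ∧ Integrable f (cubeMeasure d) ∧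
      Integrable (fun x => phi |f x|) (cubeMeasure d) ∧
      ∀ g : (Fin d → ℝ) → ℝ, Measurable g →
        ¬ TendstoInMeasure (cubeMeasure d)
          (fun n x => mixedLogMean B f (fun _ => n) x) atTop g := by
  choose Cn hCn0 hCn using fun n => Tm_bound B n
  obtain ⟨f, n, a, δ, hgood, hconv, hnk, hasum, ha1, hval, hamp, hphi, hbig, hδ2, hδC, hδ0⟩ :=
    hump_seq B hB phi hphi0 hphio Cn hCn0
  set μ := cubeMeasure d with hμ
  have hE : ∀ k, MeasurableSet {x | f k x ≠ 0} := fun k =>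
    (measurableSet_eq_fun (hgood k).meas measurable_const).compl
  have hm0 : ∀ k, 0 ≤ μ.real {x | f k x ≠ 0} := fun k => measureReal_nonneg
  have hδnn : ∀ k, 0 ≤ δ k := fun k =>
    (mul_nonneg (by linarith [ha1 k]) (hm0 k)).trans (hamp k)
  have hδgeo : ∀ k j, δ (j + k) ≤ δ k * (1 / 2) ^ j := by
    intro k j
    induction j with
    | zero => simp
    | succ j ih =>
      rw [show j + 1 + k = (j + k) + 1 by ring, pow_succ]
      have := hδ2 (j + k)
      linarith
  have hgeo : Summable (fun j : ℕ => ((1:ℝ) / 2) ^ j) := summable_geometric_two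
  have hsumm : ∀ k, Summable (fun j => δ (j + k)) := fun k =>
    Summable.of_nonneg_of_le (fun j => hδnn _) (hδgeo k) (hgeo.mul_left _)
  have htsum : ∀ k, ∑' j, δ (j + k) ≤ 2 * δ k := by
    intro k
    refine ((hsumm k).tsum_le_tsum (hδgeo k) (hgeo.mul_left _)).trans ?_
    rw [tsum_mul_left, tsum_geometric_two]; linarith
  have hsum0 : Summable δ := by simpa using hsumm 0
  have habs : ∀ k x, |f k x| = {x | f k x ≠ 0}.indicator (fun _ => a k) x := by
    intro k x
    by_cases hx : f k x = 0
    · rw [Set.indicator_of_notMem (by simpa using hx), hx, abs_zero]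
    · rw [Set.indicator_of_mem (by exact hx)]
      exact (hval k x).resolve_left hx
  have hL1 : ∀ k, ∫ x, |f k x| ∂μ ≤ δ k := by
    intro k
    simp only [habs]
    rw [integral_indicator_const _ (hE k), smul_eq_mul, mul_comm]
    exact hamp k
  -- Borel–Cantelli
  have hBC : ∀ᵐ x ∂μ, ∀ᶠ k in atTop, f k x = 0 := by
    have h1 : ∑' k, μ {x | f k x ≠ 0} ≠ ⊤ := by
      have h2 : ∀ k, μ {x | f k x ≠ 0} ≤ ENNReal.ofReal (δ k) := by
        intro k
        rw [← ofReal_measureReal]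
        refine ENNReal.ofReal_le_ofReal ?_
        exact (le_mul_of_one_le_left (hm0 k) (ha1 k)).trans (hamp k)
      refine ((ENNReal.tsum_le_tsum h2).trans_lt ?_).ne
      rw [← ENNReal.ofReal_tsum_of_nonneg hδnn hsum0]
      exact ENNReal.ofReal_lt_top
    filter_upwards [ae_eventually_notMem h1] with x hx
    filter_upwards [hx] with k hk
    by_contra h
    exact hk h
  have hsummf : ∀ᵐ x ∂μ, Summable (fun k => f k x) := by
    filter_upwards [hBC] with x hx
    obtain ⟨K, hK⟩ := eventually_atTop.1 hx
    exact summable_of_ne_finset_zero (s := Finset.range K)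
      (fun k hk => hK k (by simpa using hk))
  set F : (Fin d → ℝ) → ℝ := fun x => ∑' k, f k x with hF
  have hFm : Measurable F := Measurable.tsum (fun k => (hgood k).meas)
  obtain ⟨hFi, hFb⟩ := tsum_L1 f δ (fun k => (hgood k).meas) (fun k => (hgood k).int) hL1 hsum0
  refine ⟨F, hFm, hFi, ?_, ?_⟩
  · -- integrability of phi |F|
    set u : ℕ → (Fin d → ℝ) → ℝ := fun k => {x | f k x ≠ 0}.indicator (fun _ => phi (2 * a k))
      with hu
    have hpn : ∀ k, 0 ≤ phi (2 * a k) := fun k => hphi0 _ (by linarith [ha1 k])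
    have hum : ∀ k, Measurable (u k) := fun k => measurable_const.indicator (hE k)
    have hui : ∀ k, Integrable (u k) μ := fun k => (integrable_const _).indicator (hE k)
    have hun : ∀ k x, 0 ≤ u k x := fun k x => Set.indicator_nonneg (fun _ _ => hpn k) x
    have hub : ∀ k, ∫ x, |u k x| ∂μ ≤ δ k := by
      intro k
      simp only [abs_of_nonneg (hun k _)]
      simp only [hu]
      rw [integral_indicator_const _ (hE k), smul_eq_mul, mul_comm]
      exact hphi k
    obtain ⟨hUi, -⟩ := tsum_L1 u δ hum hui hub hsum0
    have hmono : Monotone (fun y => phi (max 0 y)) := fun y z hyz =>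
      hphimono (Set.mem_Ici.2 (le_max_left _ _)) (Set.mem_Ici.2 (le_max_left _ _)) (max_le_max le_rfl hyz)
    have hmeas : Measurable (fun x => phi |F x|) := by
      have h1 := hmono.measurable.comp hFm.abs
      have h2 : (fun x => phi |F x|) = (fun y => phi (max 0 y)) ∘ (fun x => |F x|) := by
        funext x; simp [max_eq_right (abs_nonneg (F x))]
      rw [h2]; exact h1
    refine Integrable.mono' ((integrable_const (phi 0)).add hUi) hmeas.aestronglyMeasurable ?_
    filter_upwards [hBC] with x hx
    rw [Real.norm_eq_abs, abs_of_nonneg (hphi0 _ (abs_nonneg _))]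
    obtain ⟨K, hK⟩ := eventually_atTop.1 hx
    have hus : Summable (fun k => u k x) :=
      summable_of_ne_finset_zero (s := Finset.range K) (fun k hk => by
        simp only [hu]
        rw [Set.indicator_of_notMem]
        simpa using hK k (by simpa using hk))
    have hU0 : 0 ≤ ∑' k, u k x := tsum_nonneg (fun k => hun k x)
    have hp00 : 0 ≤ phi 0 := hphi0 0 le_rfl
    simp only [Pi.add_apply]
    by_cases hall : ∀ k, f k x = 0
    · have : F x = 0 := by simp [hF, hall]
      rw [this, abs_zero]; linarith
    · have hex : ∃ J, f J x ≠ 0 ∧ ∀ k, J < k → f k x = 0 := by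
        push Not at hall
        have hbdd : ∀ m, f m x ≠ 0 → m ≤ K := by
          intro m hm
          by_contra hcon
          exact hm (hK m (by omega))
        obtain ⟨k0, hk0⟩ := hall
        classical
        refine ⟨Nat.findGreatest (fun m => f m x ≠ 0) K,
          Nat.findGreatest_spec (P := fun m => f m x ≠ 0) (hbdd k0 hk0) hk0, fun k hk => ?_⟩
        by_contra hcon
        have := Nat.le_findGreatest (P := fun m => f m x ≠ 0) (hbdd k hcon) hcon
        omega
      obtain ⟨J, hJ, hJ2⟩ := hex
      have hFx : F x = ∑ k ∈ Finset.range (J + 1), f k x :=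
        tsum_eq_sum (fun k hk => hJ2 k (by simpa using hk))
      have hFle : |F x| ≤ 2 * a J := by
        rw [hFx]
        refine (Finset.abs_sum_le_sum_abs _ _).trans ?_
        have h1 : ∀ k, |f k x| ≤ a k := by
          intro k
          rcases hval k x with h | h
          · rw [h, abs_zero]; linarith [ha1 k]
          · exact h.le
        rw [Finset.sum_range_succ]
        have h2 : ∑ k ∈ Finset.range J, |f k x| ≤ ∑ k ∈ Finset.range J, a k :=
          Finset.sum_le_sum (fun k _ => h1 k)
        linarith [h1 J, hasum J]
      have h3 : phi |F x| ≤ phi (2 * a J) :=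
        hphimono (Set.mem_Ici.2 (abs_nonneg _))
          (Set.mem_Ici.2 ((abs_nonneg _).trans hFle)) hFle
      have h4 : phi (2 * a J) = u J x := by
        simp only [hu]
        rw [Set.indicator_of_mem (by exact hJ)]
      have h5 : u J x ≤ ∑' k, u k x := hus.le_tsum J (fun k _ => hun k x)
      linarith
  · -- divergence
    intro g hg hT
    obtain ⟨R, hR⟩ := exists_small_tail μ hg
    have hT1 := hT 1 one_pos
    have hT2 := (ENNReal.tendsto_toReal ENNReal.zero_ne_top).comp hT1
    have hT3 := hT2.eventually (eventually_lt_nhds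
      (show (0:ENNReal).toReal < 1 / 16 by norm_num))
    obtain ⟨n0, hn0⟩ := eventually_atTop.1 hT3
    set k := max n0 (R + 40) with hk
    have hkn : n0 ≤ n k := (le_max_left _ _).trans (hnk k)
    have hkR : (R:ℝ) + 40 ≤ k := by exact_mod_cast le_max_right n0 (R + 40)
    have hA : μ.real {x | (1:ENNReal) ≤ edist (Tm B (n k) F x) (g x)} < 1 / 16 := hn0 (n k) hkn
    set G : (Fin d → ℝ) → ℝ := fun y => ∑ i ∈ Finset.range k, f i y with hG
    have hGi : Integrable G μ := integrable_finsetSum _ (fun i _ => (hgood i).int)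
    have hGb : ∫ x, |G x| ∂μ ≤ 2 := by
      have h1 : ∫ x, |G x| ∂μ ≤ ∫ x, ∑ i ∈ Finset.range k, |f i x| ∂μ :=
        integral_mono hGi.abs (integrable_finsetSum _ (fun i _ => (hgood i).int.abs))
          (fun x => Finset.abs_sum_le_sum_abs _ _)
      rw [integral_finsetSum _ (fun i _ => (hgood i).int.abs)] at h1
      have h2 : ∑ i ∈ Finset.range k, ∫ x, |f i x| ∂μ ≤ ∑ i ∈ Finset.range k, δ i :=
        Finset.sum_le_sum (fun i _ => hL1 i)
      have h3 : ∑ i ∈ Finset.range k, δ i ≤ ∑' i, δ i :=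
        hsum0.sum_le_tsum _ (fun i _ => hδnn i)
      have h4 := htsum 0
      simp only [add_zero, hδ0] at h4
      linarith
    have hGm : μ.real {x | (32:ℝ) ≤ |G x|} ≤ 1 / 16 := by
      have := mul_meas_ge_le_integral_of_nonneg (μ := μ) (f := fun x => |G x|)
        (Eventually.of_forall (fun x => abs_nonneg _)) hGi.abs 32
      linarith
    -- the tail
    set H : (Fin d → ℝ) → ℝ := fun y => ∑' j, f (j + (k + 1)) y with hH
    obtain ⟨hHi, hHb⟩ := tsum_L1 (fun j => f (j + (k + 1))) (fun j => δ (j + (k + 1)))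
      (fun j => (hgood _).meas) (fun j => (hgood _).int) (fun j => hL1 _) (hsumm (k + 1))
    have hHT : ∀ x, |Tm B (n k) H x| ≤ 1 := by
      intro x
      refine (hCn (n k) H hHi x).trans ?_
      refine le_trans (mul_le_mul_of_nonneg_left ?_ (hCn0 (n k)).le) (hδC k)
      exact hHb.trans (htsum (k + 1))
    have hdecomp : F =ᵐ[μ] fun y => (G y + f k y) + H y := by
      filter_upwards [hsummf] with x hx
      rw [hF, hG, hH]
      simp only
      rw [← hx.sum_add_tsum_nat_add (k + 1), Finset.sum_range_succ]
    have hTF : ∀ x, Tm B (n k) F x = Tm B (n k) G x + Tm B (n k) (f k) x + Tm B (n k) H x := by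
      intro x
      have h1 : Tm B (n k) F x = Tm B (n k) (fun y => (G y + f k y) + H y) x := by
        have : ∀ j, walshCoef F j = walshCoef (fun y => (G y + f k y) + H y) j := by
          intro j
          rw [walshCoef_eq, walshCoef_eq]
          refine integral_congr_ae ?_
          filter_upwards [hdecomp] with y hy
          rw [hy]
        simp only [Tm_eq, this]
      rw [h1, Tm_add B (n k) (f := fun y => G y + f k y) (g := H) (hGi.add (hgood k).int) hHi,
        Tm_add B (n k) hGi (hgood k).int]
    have hsub : {x | (k:ℝ) + 1 ≤ |Tm B (n k) (f k) x|} ⊆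
        ({x | (1:ENNReal) ≤ edist (Tm B (n k) F x) (g x)} ∪ {x | (R:ℝ) ≤ |g x|}) ∪
          {x | (32:ℝ) ≤ |G x|} := by
      intro x hx
      by_contra hcon
      simp only [Set.mem_union, not_or] at hcon
      obtain ⟨⟨c1, c2⟩, c3⟩ := hcon
      have d1 : |Tm B (n k) F x - g x| < 1 := by
        change ¬ ((1:ENNReal) ≤ edist (Tm B (n k) F x) (g x)) at c1
        rw [not_le, edist_dist, Real.dist_eq, ENNReal.ofReal_lt_one] at c1
        exact c1
      have d2 : |g x| < R := not_le.1 c2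
      have d3 : |G x| < 32 := not_le.1 c3
      have d4 : |Tm B (n k) G x - G x| ≤ 1 := hconv k x
      have d5 := hHT x
      have d6 : (k:ℝ) + 1 ≤ |Tm B (n k) (f k) x| := hx
      have d7 := hTF x
      rw [abs_lt] at d1 d2 d3
      rw [abs_le] at d4 d5
      have d8 : |Tm B (n k) (f k) x| ≤ R + 36 := by
        rw [abs_le]; constructor <;> linarith
      linarith
    have h1 := measureReal_mono (μ := μ) hsub
    have h2 := measureReal_union_le (μ := μ)
      ({x | (1:ENNReal) ≤ edist (Tm B (n k) F x) (g x)} ∪ {x | (R:ℝ) ≤ |g x|})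
      {x | (32:ℝ) ≤ |G x|}
    have h3 := measureReal_union_le (μ := μ)
      {x | (1:ENNReal) ≤ edist (Tm B (n k) F x) (g x)} {x | (R:ℝ) ≤ |g x|}
    have h4 := hbig k
    linarith

/-- Corollary (measuredivergence). If `|B| > 1` and `φ(x) = o(x log^{|B|-1} x)`
with `φ` nondecreasing, there is `f ∈ L^1(I^d)` with `∫ φ(|f|) < ∞` whose means
`(L_{n(B)} ∘ R_{n(B')})(f)` diverge in measure on `I^d`. -/
theorem stmt7 (d : ℕ) (hd : 1 ≤ d) (B : Finset (Fin d)) (hB : 1 < B.card)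
    (phi : ℝ → ℝ) (hphi0 : ∀ x ≥ (0:ℝ), 0 ≤ phi x) (hphimono : MonotoneOn phi (Set.Ici 0))
    (hphio : Tendsto (fun x => phi x / (x * Real.log x ^ (B.card - 1))) atTop (nhds 0)) :
    ∃ f : (Fin d → ℝ) → ℝ, Measurable f ∧ Integrable f (cubeMeasure d) ∧
      Integrable (fun x => phi |f x|) (cubeMeasure d) ∧
      ∀ g : (Fin d → ℝ) → ℝ, Measurable g →
        ¬ TendstoInMeasure (cubeMeasure d)
          (fun n x => mixedLogMean B f (fun _ => n) x) atTop g := by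
  exact main_div d B hB phi hphi0 hphimono hphio

end
end

section
/- There exists an absolute constant c > 0 such that for every n ≥ m_0 and every x ∈ Ω_n, the Nörlund logarithmic kernel satisfies |F_{p_n}(x)| ≥ c/x. -/
open MeasureTheory Filter

noncomputable section

lemma rad_abs (k : ℕ) (x : ℝ) : |rademacher k x| = 1 := by
  unfold rademacher r0; split_ifs <;> simp

lemma rad_one {m k : ℕ} {x : ℝ} (h0 : 0 ≤ x) (h1 : 2 ^ m * x < 1) (hk : k < m) :
    rademacher k x = 1 := by
  have h2 : (2:ℝ) ^ k * x < 1 / 2 := by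
    have h3 : (2:ℝ) ^ (k + 1) ≤ 2 ^ m := pow_le_pow_right₀ (by norm_num) hk
    have h4 := mul_le_mul_of_nonneg_right h3 h0
    rw [pow_succ] at h4
    linarith
  have h5 : 0 ≤ (2:ℝ) ^ k * x := by positivity
  unfold rademacher r0
  rw [Int.fract_eq_self.2 ⟨h5, by linarith⟩, if_pos h2]

lemma rad_neg {m : ℕ} {x : ℝ} (h0 : 1 / 2 ≤ 2 ^ m * x) (h1 : 2 ^ m * x < 1) :
    rademacher m x = -1 := by
  unfold rademacher r0
  rw [Int.fract_eq_self.2 ⟨by linarith, h1⟩, if_neg (not_lt.2 h0)]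

lemma walsh_eq {n M : ℕ} (x : ℝ) (h : n < 2 ^ M) :
    walsh n x = ∏ k ∈ Finset.range M, if n.testBit k then rademacher k x else 1 := by
  have key : ∀ a b : ℕ, a ≤ b → n < 2 ^ a →
      (∏ k ∈ Finset.range a, if n.testBit k then rademacher k x else 1) =
      ∏ k ∈ Finset.range b, if n.testBit k then rademacher k x else 1 := by
    intro a b hab hn
    apply Finset.prod_subset (Finset.range_mono hab)
    intro k _ hk
    have hk' : a ≤ k := by simpa using hk
    rw [Nat.testBit_lt_two_pow (hn.trans_le (Nat.pow_le_pow_right (by norm_num) hk'))]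
    simp
  unfold walsh
  rcases le_total (n + 1) M with hprime | hprime
  · exact key _ _ hprime (Nat.lt_two_pow_self.trans_le (Nat.pow_le_pow_right (by norm_num) (by omega)))
  · exact (key _ _ hprime h).symm

lemma walsh_add (e q s : ℕ) (x : ℝ) (hs : s < 2 ^ e) :
    walsh (2 ^ e * q + s) x = walsh (2 ^ e * q) x * walsh s x := by
  set M := 2 ^ e * q + s with hM
  have hMM : M < 2 ^ M := Nat.lt_two_pow_self
  rw [walsh_eq x hMM, walsh_eq (M := M) x (by omega : 2 ^ e * q < 2 ^ M),
    walsh_eq (M := M) x (by omega : s < 2 ^ M), ← Finset.prod_mul_distrib]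
  apply Finset.prod_congr rfl
  intro k _
  have h1 : M.testBit k = if k < e then s.testBit k else q.testBit (k - e) := by
    rw [hM]; exact Nat.testBit_two_pow_mul_add q hs k
  have h2 : (2 ^ e * q).testBit k = if k < e then false else q.testBit (k - e) := by
    have := Nat.testBit_two_pow_mul_add q (b := 0) (i := e) (by positivity) k
    simpa using this
  rw [h1, h2]
  by_cases hk : k < e
  · simp [hk]
  · have : s.testBit k = false :=
      Nat.testBit_lt_two_pow (hs.trans_le (Nat.pow_le_pow_right (by norm_num) (by omega)))
    simp [hk, this]

lemma walsh_small {m s : ℕ} {x : ℝ} (h0 : 1 / 2 ≤ 2 ^ m * x) (h1 : 2 ^ m * x < 1)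
    (hs : s < 2 ^ (m + 1)) : walsh s x = if s < 2 ^ m then 1 else -1 := by
  have hx : 0 ≤ x := by
    by_contra hx
    have : (2:ℝ) ^ m * x < 0 := mul_neg_of_pos_of_neg (by positivity) (by linarith)
    linarith
  split_ifs with h
  · rw [walsh_eq x h]
    apply Finset.prod_eq_one
    intro k hk
    rw [rad_one hx h1 (Finset.mem_range.1 hk)]; simp
  · rw [walsh_eq x hs, Finset.prod_range_succ, Finset.prod_eq_one, rad_neg h0 h1]
    · have : s.testBit m = true := by
        have hh : s = 2 ^ m + (s - 2 ^ m) := by omega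
        rw [hh, Nat.testBit_two_pow_add_eq, Nat.testBit_lt_two_pow (by rw [pow_succ] at hs; omega)]
        rfl
      simp [this]
    · intro k hk
      rw [rad_one hx h1 (Finset.mem_range.1 hk)]; simp

/-- The tent function. -/
def tent (A : ℝ) (s : ℝ) : ℝ := min s (2 * A - s)

lemma dir_small {m : ℕ} {x : ℝ} (h0 : 1 / 2 ≤ 2 ^ m * x) (h1 : 2 ^ m * x < 1)
    (s : ℕ) (hs : s ≤ 2 ^ (m + 1)) : dirichletKernel s x = tent (2 ^ m) s := by
  induction s with
  | zero => simp [dirichletKernel, tent]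
  | succ s ih =>
    have ih := ih (by omega)
    unfold dirichletKernel at ih ⊢
    rw [Finset.sum_range_succ, ih, walsh_small h0 h1 (by omega)]
    unfold tent
    push_cast
    split_ifs with h
    · have hprime : (s:ℝ) + 1 ≤ 2 ^ m := by exact_mod_cast h
      rw [min_eq_left (by linarith), min_eq_left (by linarith)]
    · have hprime : (2:ℝ) ^ m ≤ s := by exact_mod_cast (not_lt.1 h)
      rw [min_eq_right (by linarith), min_eq_right (by linarith)]; ring

lemma dir_add (e q s : ℕ) (x : ℝ) (hs : s ≤ 2 ^ e) :
    dirichletKernel (2 ^ e * q + s) x =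
      dirichletKernel (2 ^ e * q) x + walsh (2 ^ e * q) x * dirichletKernel s x := by
  unfold dirichletKernel
  rw [Finset.sum_range_add, Finset.mul_sum]
  congr 1
  apply Finset.sum_congr rfl
  intro t ht
  exact walsh_add e q t x ((Finset.mem_range.1 ht).trans_le hs)

lemma dir_full {m : ℕ} {x : ℝ} (h0 : 1 / 2 ≤ 2 ^ m * x) (h1 : 2 ^ m * x < 1)
    (q s : ℕ) (hs : s ≤ 2 ^ (m + 1)) :
    dirichletKernel (2 ^ (m + 1) * q + s) x =
      walsh (2 ^ (m + 1) * q) x * tent (2 ^ m) s := by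
  have hz : ∀ q : ℕ, dirichletKernel (2 ^ (m + 1) * q) x = 0 := by
    intro q
    induction q with
    | zero => simp [dirichletKernel]
    | succ q ih =>
      rw [Nat.mul_succ, dir_add _ _ _ _ le_rfl, ih, dir_small h0 h1 _ le_rfl]
      have : tent (2 ^ m) ((2 ^ (m + 1) : ℕ) : ℝ) = 0 := by
        unfold tent; push_cast; rw [pow_succ, min_eq_right] <;> nlinarith [pow_pos (two_pos : (0:ℝ) < 2) m]
      rw [this]; ring
  rw [dir_add _ _ _ _ hs, hz, dir_small h0 h1 s hs]; ring

/-- real harmonic sums -/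
def harm (n : ℕ) : ℝ := ∑ i ∈ Finset.range n, 1 / ((i : ℝ) + 1)

lemma harm_eq (n : ℕ) : harm n = ((harmonic n : ℚ) : ℝ) := by
  unfold harm harmonic
  push_cast
  simp

lemma harm_le (n : ℕ) : harm n ≤ 1 + Real.log n := by
  rw [harm_eq]; exact harmonic_le_one_add_log n

lemma le_harm (n : ℕ) : Real.log (n + 1) ≤ harm n := by
  rw [harm_eq]; exact_mod_cast log_add_one_le_harmonic n

lemma logSum_eq (n : ℕ) : logSum n = harm (n - 1) := by
  unfold logSum harm
  have h := Finset.sum_Ico_add' (fun i : ℕ => 1 / (i : ℝ)) 0 (n - 1) 1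
  rw [Finset.range_eq_Ico]
  push_cast at h
  rw [h]
  apply Finset.sum_congr _ (fun _ _ => rfl)
  ext i; simp only [Finset.mem_Icc, Finset.mem_Ico]; omega

lemma harm_mono {a b : ℕ} (h : a ≤ b) : harm a ≤ harm b := by
  unfold harm
  apply Finset.sum_le_sum_of_subset_of_nonneg (Finset.range_mono h)
  intros; positivity

lemma pIdx_closed (n : ℕ) : 3 * pIdx n + 1 = 4 ^ (n + 1) := by
  unfold pIdx
  induction n with
  | zero => simp
  | succ n ih => rw [Finset.sum_range_succ, pow_succ 4 (n + 1)]; omega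

lemma pIdx_split_s11 (m n : ℕ) (h : m ≤ 2 * n) : ∃ Q R : ℕ, pIdx n = 2 ^ (m + 1) * Q + R ∧
    (3 * R + 1 = 2 * 2 ^ m ∨ 3 * R + 1 = 4 * 2 ^ m) := by
  have key : ∀ k ≤ n, ∃ Q, pIdx n = 4 ^ (k + 1) * Q + pIdx k := by
    intro k hk
    refine ⟨∑ j ∈ Finset.range (n - k), 4 ^ j, ?_⟩
    unfold pIdx
    have : n + 1 = (k + 1) + (n - k) := by omega
    rw [this, Finset.sum_range_add, Finset.mul_sum, add_comm]
    simp [pow_add]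
  rcases Nat.even_or_odd' m with ⟨k, rfl | rfl⟩
  · obtain ⟨Q, hQ⟩ := key k (by omega)
    refine ⟨2 * Q, pIdx k, ?_, Or.inr ?_⟩
    · rw [hQ, pow_succ, pow_succ, pow_mul]; norm_num; ring
    · rw [pIdx_closed, pow_succ, pow_mul]; norm_num; ring
  · obtain ⟨Q, hQ⟩ := key k (by omega)
    refine ⟨Q, pIdx k, ?_, Or.inl ?_⟩
    · rw [hQ, show 2 * k + 1 + 1 = 2 * (k + 1) by ring, pow_mul 2 2]; norm_num
    · rw [pIdx_closed, pow_succ, pow_succ 2, pow_mul]; norm_num; ring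

lemma kernel_sum (N : ℕ) (x : ℝ) : ∑ i ∈ Finset.Ico 1 N, dirichletKernel (N - i) x / i =
    ∑ j ∈ Finset.range N, dirichletKernel j x / ((N : ℝ) - j) := by
  rw [← Finset.sum_range_reflect]
  rcases Nat.eq_zero_or_pos N with rfl | hN
  · simp
  obtain ⟨M, rfl⟩ : ∃ M, N = M + 1 := ⟨N - 1, by omega⟩
  rw [Finset.sum_range_succ, Finset.sum_Ico_eq_sum_range]
  have h0 : dirichletKernel (M + 1 - 1 - M) x = 0 := by simp [dirichletKernel]
  rw [h0, zero_div, add_zero]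
  apply Finset.sum_congr rfl
  intro i hi
  have hi' : i < M := by simpa using hi
  rw [show M + 1 - (1 + i) = M + 1 - 1 - i by omega]
  congr 1
  rw [show M + 1 - 1 - i = M - i by omega, Nat.cast_sub hi'.le]
  push_cast; ring

lemma sum_blocks (f : ℕ → ℝ) (B Q : ℕ) : ∑ j ∈ Finset.range (B * Q), f j =
    ∑ q ∈ Finset.range Q, ∑ s ∈ Finset.range B, f (B * q + s) := by
  induction Q with
  | zero => simp
  | succ Q ih => rw [Nat.mul_succ, Finset.sum_range_add, ih, Finset.sum_range_succ]

lemma tent_nonneg {A s : ℝ} (h : 0 ≤ s) (hprime : s ≤ 2 * A) : 0 ≤ tent A s :=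
  le_min h (by linarith)

lemma tent_sum (a : ℕ) : ∑ s ∈ Finset.range (2 * a), tent (a : ℝ) s = (a : ℝ) ^ 2 := by
  rw [two_mul, Finset.sum_range_add, ← Finset.sum_add_distrib]
  have : ∀ s ∈ Finset.range a, tent (a : ℝ) s + tent (a : ℝ) ((a + s : ℕ) : ℝ) = a := by
    intro s hs
    have hs' : (s : ℝ) ≤ a := by exact_mod_cast (Finset.mem_range.1 hs).le
    have hs0 : (0 : ℝ) ≤ s := by positivity
    unfold tent
    push_cast
    rw [min_eq_left (by linarith), min_eq_right (by linarith)]; ring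
  rw [Finset.sum_congr rfl this]
  simp [sq]

lemma second_part (A : ℝ) (R : ℕ) :
    tent A R * harm R - R ≤ ∑ s ∈ Finset.range R, tent A s / ((R : ℝ) - s) := by
  rw [← Finset.sum_range_reflect]
  have h1 : tent A R * harm R - R =
      ∑ i ∈ Finset.range R, (tent A R * (1 / ((i : ℝ) + 1)) - 1) := by
    rw [Finset.sum_sub_distrib, harm, Finset.mul_sum]; simp
  rw [h1]
  apply Finset.sum_le_sum
  intro i hi
  have hi' : i < R := by simpa using hi
  have hc : ((R - 1 - i : ℕ) : ℝ) = R - (i + 1) := by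
    rw [show R - 1 - i = R - (i + 1) by omega, Nat.cast_sub (by omega)]; push_cast; ring
  rw [hc]
  have hp : (0 : ℝ) < (i : ℝ) + 1 := by positivity
  have ht : tent A R - (i + 1) ≤ tent A (R - (i + 1)) := by
    unfold tent
    apply le_min
    · linarith [min_le_left (R : ℝ) (2 * A - R)]
    · linarith [min_le_right (R : ℝ) (2 * A - R)]
  rw [sub_sub_cancel]
  calc tent A R * (1 / ((i : ℝ) + 1)) - 1 = (tent A R - (i + 1)) / (i + 1) := by field_simp
    _ ≤ _ := by gcongr

lemma first_part (a Q R : ℕ) (ha : 0 < a) (hR : a ≤ 2 * R) :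
    ∑ q ∈ Finset.range Q, ∑ s ∈ Finset.range (2 * a),
      tent (a : ℝ) s / ((2 * a * Q + R : ℝ) - (2 * a * q + s)) ≤
      (a / 2 : ℝ) * harm Q + 2 * a := by
  have haR : (0 : ℝ) < a := by exact_mod_cast ha
  have hRR : (a : ℝ) ≤ 2 * R := by exact_mod_cast hR
  have hR0 : (0 : ℝ) < R := by linarith
  have h1 : ∀ q ∈ Finset.range Q, ∑ s ∈ Finset.range (2 * a),
      tent (a : ℝ) s / ((2 * a * Q + R : ℝ) - (2 * a * q + s)) ≤
      (fun k : ℕ => (a : ℝ) ^ 2 / (2 * a * k + R)) (Q - 1 - q) := by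
    intro q hq
    have hq' : q < Q := by simpa using hq
    have hc : ((Q - 1 - q : ℕ) : ℝ) = Q - (q + 1) := by
      rw [show Q - 1 - q = Q - (q + 1) by omega, Nat.cast_sub (by omega)]; push_cast; ring
    have hcn : (0 : ℝ) ≤ Q - (q + 1) := by rw [← hc]; positivity
    simp only [hc]
    rw [← tent_sum, Finset.sum_div]
    apply Finset.sum_le_sum
    intro s hs
    have hs' : (s : ℝ) ≤ 2 * a := by exact_mod_cast (Finset.mem_range.1 hs).le
    have := tent_nonneg (Nat.cast_nonneg s) hs'
    have h3 : (0 : ℝ) ≤ 2 * a * (Q - (q + 1)) := by positivity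
    apply div_le_div_of_nonneg_left this (by linarith)
    linarith
  refine (Finset.sum_le_sum h1).trans ?_
  rw [Finset.sum_range_reflect (fun k : ℕ => (a : ℝ) ^ 2 / (2 * a * k + R)) Q]
  have hh : 0 ≤ harm Q := by unfold harm; positivity
  rcases Nat.eq_zero_or_pos Q with rfl | hQ
  · simp only [Finset.range_zero, Finset.sum_empty]; positivity
  obtain ⟨P, rfl⟩ : ∃ P, Q = P + 1 := ⟨Q - 1, by omega⟩
  rw [Finset.sum_range_succ']
  have h2 : ∑ k ∈ Finset.range P, (a : ℝ) ^ 2 / (2 * a * ((k + 1 : ℕ) : ℝ) + R) ≤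
      (a / 2 : ℝ) * harm (P + 1) := by
    refine le_trans ?_ (mul_le_mul_of_nonneg_left (harm_mono (Nat.le_succ P)) (by positivity))
    rw [harm, Finset.mul_sum]
    apply Finset.sum_le_sum
    intro k _
    push_cast
    have hk : (0 : ℝ) < (k : ℝ) + 1 := by positivity
    calc (a : ℝ) ^ 2 / (2 * a * (k + 1) + R) ≤ (a : ℝ) ^ 2 / (2 * a * (k + 1)) := by
          apply div_le_div_of_nonneg_left (by positivity) (by positivity); linarith
      _ = _ := by field_simp
  have h3 : (a : ℝ) ^ 2 / (2 * a * ((0 : ℕ) : ℝ) + R) ≤ 2 * a := by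
    rw [div_le_iff₀ (by simpa using hR0)]
    push_cast
    nlinarith
  linarith

lemma m0_ge : 100 ≤ m₀ := by
  have hne : {m : ℕ | 1 < mTilde m}.Nonempty := by
    obtain ⟨k, hk⟩ := exists_nat_ge (Real.exp (16 * (2 ^ 15 + 2)))
    refine ⟨2 * k, ?_⟩
    show 1 < mTilde (2 * k)
    have hk0 : (0 : ℝ) < k := (Real.exp_pos _).trans_le hk
    have hp : k < pIdx k := by
      have := pIdx_closed k
      have h4 : k + 1 < 2 ^ (k + 1) := Nat.lt_two_pow_self
      have h5 : 2 ^ (k + 1) * 2 ^ (k + 1) = 4 ^ (k + 1) := by rw [← mul_pow]; norm_num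
      have h6 : 2 * 2 ≤ 2 ^ (k + 1) * 2 := by
        have : 1 ≤ 2 ^ k := Nat.one_le_two_pow
        rw [pow_succ]; omega
      have hkn : 0 < k := by exact_mod_cast hk0
      nlinarith
    have hl : Real.log k ≤ logSum (pIdx k - 1) := by
      rw [logSum_eq]
      refine le_trans ?_ (le_harm _)
      apply Real.log_le_log hk0
      have : k ≤ pIdx k - 1 - 1 + 1 := by omega
      exact_mod_cast this
    have hl2 : 16 * (2 ^ 15 + 2) ≤ Real.log k := (Real.le_log_iff_exp_le hk0).2 hk
    unfold mTilde
    rw [show 2 * k / 2 = k by omega]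
    have : (2 : ℤ) ≤ ⌊logSum (pIdx k - 1) / 16 - 2 ^ 15⌋ := by
      rw [Int.le_floor]; push_cast; linarith
    omega
  have hmem : 1 < mTilde m₀ := Nat.sInf_mem hne
  by_contra hlt
  obtain ⟨E, hE⟩ : ∃ E : ℕ, E = 50 := ⟨50, rfl⟩
  have h1 : (2 : ℤ) ≤ ⌊logSum (pIdx (m₀ / 2) - 1) / 16 - 2 ^ 15⌋ := hmem
  rw [Int.le_floor, logSum_eq] at h1
  push_cast at h1
  have h2 : pIdx (m₀ / 2) - 1 - 1 ≤ 4 ^ E := by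
    have := pIdx_closed (m₀ / 2)
    have h5 : 4 ^ (m₀ / 2 + 1) ≤ 4 ^ E := Nat.pow_le_pow_right (by norm_num) (by omega)
    omega
  have h3 := (harm_mono h2).trans (harm_le _)
  have h4 : Real.log ((4 ^ E : ℕ) : ℝ) ≤ E * 3 := by
    push_cast
    rw [Real.log_pow]
    have := Real.log_le_sub_one_of_pos (show (0:ℝ) < 4 by norm_num)
    gcongr
    linarith
  have h6 : (E : ℝ) = 50 := by rw [hE]; norm_num
  rw [h6] at h4
  linarith

lemma final_ineq (a m L : ℝ) (hm : 100 ≤ m) (ham : m + 1 ≤ a) (hL1 : 0.69 ≤ L) (hL2 : L ≤ 1) :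
    a * m / 20 ≤ (2 * a - 1) / 3 * ((m - 1) * L) - 4 / 3 * a - (a / 2 * (1 + m * L) + 2 * a) := by
  have ha : 0 ≤ a := by linarith
  have g1 : (m - 1) * L ≤ a := by nlinarith
  have g2 : a * L ≤ a := by nlinarith
  have g3 : a * m * 0.69 ≤ a * m * L := mul_le_mul_of_nonneg_left hL1 (by positivity)
  have g4 : a * 100 ≤ a * m := by gcongr
  linarith

/-- Lemma (GG). There is an absolute constant `c > 0` such that
`|F_{p_n}(x)| ≥ c/x` for every `n ≥ m₀` and `x ∈ Ω_n`. -/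
theorem stmt11 : ∃ c > (0:ℝ), ∀ n : ℕ, m₀ ≤ n → ∀ x ∈ Omega n,
    c / x ≤ |FKernel (pIdx n) x| := by
  refine ⟨1 / 80, by norm_num, ?_⟩
  intro n hn x hx
  unfold Omega at hx
  simp only [Set.mem_iUnion, Finset.mem_Icc, exists_prop] at hx
  obtain ⟨m, ⟨hnm, hm2⟩, hx1, hx2⟩ := hx
  have hm100 : 100 ≤ m := m0_ge.trans (hn.trans hnm)
  have hA0 : (0 : ℝ) < 2 ^ m := by positivity
  have e1 : (2:ℝ) ^ (-(m:ℤ)) = (2 ^ m)⁻¹ := by rw [zpow_neg, zpow_natCast]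
  have h0 : 1 / 2 ≤ 2 ^ m * x := by
    have e2 : (2:ℝ) ^ (-(m:ℤ) - 1) = (2 ^ m)⁻¹ / 2 := by
      rw [zpow_sub_one₀ (by norm_num), e1]; ring
    have e3 : (0:ℝ) < (2:ℝ) ^ (-(m:ℤ) - mTilde m) := by positivity
    have h4 : (2 ^ m)⁻¹ / 2 ≤ x := by rw [← e2]; linarith
    calc (1:ℝ) / 2 = 2 ^ m * ((2 ^ m)⁻¹ / 2) := by field_simp
      _ ≤ _ := by gcongr
  have h1 : 2 ^ m * x < 1 := by
    rw [e1] at hx2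
    calc 2 ^ m * x < 2 ^ m * (2 ^ m)⁻¹ := by gcongr
      _ = 1 := by field_simp
  have hx0 : 0 < x := by
    by_contra h
    have : (2:ℝ) ^ m * x ≤ 0 := mul_nonpos_of_nonneg_of_nonpos hA0.le (not_lt.1 h)
    linarith
  obtain ⟨Q, R, hN, hR⟩ := pIdx_split_s11 m n hm2
  set a : ℕ := 2 ^ m with ha
  have haA : (a : ℝ) = 2 ^ m := by rw [ha]; push_cast; rfl
  have hB : 2 ^ (m + 1) = 2 * a := by rw [pow_succ, ha]; ring
  have hma : m < a := Nat.lt_two_pow_self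
  have hNN := pIdx_closed n
  have hNlt : 3 * pIdx n + 1 ≤ 4 * (a * a) := by
    rw [hNN, pow_succ, ha, ← mul_pow]
    have : 4 ^ n ≤ 4 ^ m := Nat.pow_le_pow_right (by norm_num) hnm
    norm_num; omega
  have hQ : Q ≤ a := by
    by_contra h
    have : 2 * a * (a + 1) ≤ 2 * a * Q := Nat.mul_le_mul_left _ (by omega)
    rw [hB] at hN
    nlinarith
  have hRa : a ≤ 2 * R := by omega
  have hR2 : R ≤ 2 * a := by omega
  -- decompose the sum
  have hS : ∑ i ∈ Finset.Ico 1 (pIdx n), dirichletKernel (pIdx n - i) x / i =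
      (∑ q ∈ Finset.range Q, ∑ s ∈ Finset.range (2 * a), walsh (2 ^ (m + 1) * q) x *
        (tent (a : ℝ) s / ((2 * a * Q + R : ℝ) - (2 * a * q + s)))) +
      walsh (2 ^ (m + 1) * Q) x * ∑ s ∈ Finset.range R, tent (a : ℝ) s / ((R : ℝ) - s) := by
    rw [kernel_sum, hN, Finset.sum_range_add, sum_blocks, Finset.mul_sum]
    congr 1
    · rw [hB]
      apply Finset.sum_congr rfl
      intro q _
      apply Finset.sum_congr rfl
      intro s hs
      rw [← hB, dir_full h0 h1 q s (by rw [hB]; exact (Finset.mem_range.1 hs).le), hB, haA]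
      push_cast
      rw [haA]; ring
    · apply Finset.sum_congr rfl
      intro s hs
      rw [dir_full h0 h1 Q s (by have := Finset.mem_range.1 hs; omega), haA]
      push_cast
      rw [add_sub_add_left_eq_sub]; ring
  set S := ∑ i ∈ Finset.Ico 1 (pIdx n), dirichletKernel (pIdx n - i) x / i with hSdef
  set X := ∑ q ∈ Finset.range Q, ∑ s ∈ Finset.range (2 * a), walsh (2 ^ (m + 1) * q) x *
        (tent (a : ℝ) s / ((2 * a * Q + R : ℝ) - (2 * a * q + s))) with hX
  set Y := ∑ s ∈ Finset.range R, tent (a : ℝ) s / ((R : ℝ) - s) with hY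
  have hXle : |X| ≤ (a / 2 : ℝ) * harm Q + 2 * a := by
    refine le_trans ?_ (first_part a Q R (by omega) hRa)
    refine (Finset.abs_sum_le_sum_abs _ _).trans (Finset.sum_le_sum fun q hq => ?_)
    refine (Finset.abs_sum_le_sum_abs _ _).trans (Finset.sum_le_sum fun s hs => ?_)
    rw [abs_mul, walsh_abs, one_mul]
    apply le_of_eq
    apply abs_of_nonneg
    have hs' : (s : ℝ) ≤ 2 * a := by exact_mod_cast (Finset.mem_range.1 hs).le
    have hq' : (q : ℝ) + 1 ≤ Q := by exact_mod_cast (Finset.mem_range.1 hq)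
    apply div_nonneg (tent_nonneg (Nat.cast_nonneg s) hs')
    have h7 : (2 * a : ℝ) * (q + 1) ≤ 2 * a * Q := by gcongr
    have h8 : (0 : ℝ) ≤ R := by positivity
    linarith
  have hYle : tent (a : ℝ) R * harm R - R ≤ Y := second_part a R
  have hSge : Y - |X| ≤ |S| := by
    have h5 : |S| ≥ |walsh (2 ^ (m + 1) * Q) x * Y| - |X| := by
      rw [hS]
      have := abs_sub_abs_le_abs_sub (walsh (2 ^ (m + 1) * Q) x * Y) (-X)
      rw [abs_neg, sub_neg_eq_add, add_comm _ X] at this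
      exact this
    rw [abs_mul, walsh_abs, one_mul] at h5
    linarith [le_abs_self Y]
  -- numerical estimates
  have hL1 := Real.log_two_gt_d9
  have hL2 := Real.log_two_lt_d9
  set L := Real.log 2 with hL
  have hloga : Real.log a = m * L := by rw [haA, Real.log_pow]
  have ham : (m : ℝ) + 1 ≤ a := by exact_mod_cast hma
  have hm' : (100 : ℝ) ≤ m := by exact_mod_cast hm100
  have ha0 : (0 : ℝ) < a := by linarith
  have hHQ : harm Q ≤ 1 + m * L := by
    rw [← hloga]; exact (harm_mono hQ).trans (harm_le a)
  have hRa' : (a : ℝ) ≤ 2 * R := by exact_mod_cast hRa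
  have hHR : (m - 1) * L ≤ harm R := by
    refine le_trans ?_ (le_harm R)
    have : (m - 1) * L = Real.log (a / 2) := by
      rw [Real.log_div (by positivity) (by norm_num), hloga]; ring
    rw [this]
    apply Real.log_le_log (by positivity); linarith
  have hR43 : (R : ℝ) ≤ 4 / 3 * a := by
    have : 3 * R ≤ 4 * a := by omega
    have : (3 : ℝ) * R ≤ 4 * a := by exact_mod_cast this
    linarith
  have hT : (2 * a - 1 : ℝ) / 3 ≤ tent (a : ℝ) R := by
    unfold tent
    rcases hR with hR | hR
    · have : (3 : ℝ) * R + 1 = 2 * a := by exact_mod_cast hR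
      apply le_min <;> linarith
    · have : (3 : ℝ) * R + 1 = 4 * a := by exact_mod_cast hR
      apply le_min <;> linarith
  have hprod : (2 * a - 1 : ℝ) / 3 * ((m - 1) * L) ≤ tent (a : ℝ) R * harm R := by
    have hh : 0 ≤ (m - 1) * L := mul_nonneg (by linarith) (by linarith)
    have hh2 : (0 : ℝ) ≤ (2 * a - 1) / 3 := by linarith
    exact mul_le_mul hT hHR hh (hh2.trans hT)
  have hX2 : (a / 2 : ℝ) * harm Q ≤ a / 2 * (1 + m * L) := by gcongr
  have hSfin : (a : ℝ) * m / 20 ≤ |S| := by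
    have h6 := final_ineq a m L hm' ham (by linarith) (by linarith)
    linarith
  have hNlog : logSum (pIdx n) ≤ 2 * m := by
    rw [logSum_eq]
    have h7 : pIdx n - 1 ≤ 2 * (a * a) := by omega
    refine ((harm_mono h7).trans (harm_le _)).trans ?_
    push_cast
    rw [Real.log_mul (by norm_num) (by positivity), Real.log_mul (by positivity) (by positivity),
      hloga]
    nlinarith
  have hNpos : 0 < logSum (pIdx n) := by
    rw [logSum_eq]
    refine lt_of_lt_of_le ?_ (le_harm _)
    apply Real.log_pos
    have : R ≤ pIdx n := by omega
    have : 0 < pIdx n - 1 := by omega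
    have : (0 : ℝ) < ((pIdx n - 1 : ℕ) : ℝ) := by exact_mod_cast this
    linarith
  unfold FKernel
  rw [← hSdef, abs_mul, abs_of_pos (by positivity : 0 < 1 / logSum (pIdx n)), one_div_mul_eq_div,
    le_div_iff₀ hNpos]
  have hxi : 1 / 80 / x ≤ a / 40 := by
    rw [div_le_iff₀ hx0, haA]; linarith
  calc 1 / 80 / x * logSum (pIdx n) ≤ a / 40 * (2 * m) := by gcongr
    _ = a * m / 20 := by ring
    _ ≤ |S| := hSfin

end
end
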